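/- arXiv:2502.09958 — 4 statements merged into one kernel-verified Lean document; each statement's English description precedes it below -/
import Mathlib

section
/- Let K be a finite geometric simplicial complex in ℝⁿ with at least one face. Then the space |K| is a connected topological space if and only if the 1-skeleton graph G(K) is a connected graph (preconnected with nonempty vertex set). -/
open Geometry

namespace PaperAlg

/-- Points of `ℝⁿ`. -/
abbrev Pt (n : ℕ) := EuclideanSpace ℝ (Fin n)

variable {n : ℕ}

/-- The 1-skeleton graph of a geometric simplicial complex `K`: its vertex set is the set of
vertices of `K`, and two vertices are adjacent iff they form an edge (a two-element face) of `K`. -/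
def skeletonGraph (K : SimplicialComplex ℝ (Pt n)) : SimpleGraph K.vertices where
  Adj u v := (u : Pt n) ≠ (v : Pt n) ∧
    ∃ s ∈ K.faces, (s : Set (Pt n)) = {(u : Pt n), (v : Pt n)}
  symm := by
    constructor
    rintro u v ⟨hne, s, hs, hset⟩
    exact ⟨fun h => hne h.symm, s, hs, by rw [hset, Set.pair_comm]⟩
  loopless := by constructor; rintro u ⟨hne, -⟩; exact hne rfl

/-- `K` is 2-dimensional: every face has at most three elements. -/
def TwoDimensional (K : SimplicialComplex ℝ (Pt n)) : Prop :=
  ∀ s ∈ K.faces, s.card ≤ 3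

/-- The set of triangles (three-element faces) of `K` containing the finset `e`. -/
def trianglesContaining (K : SimplicialComplex ℝ (Pt n)) (e : Finset (Pt n)) :
    Set (Finset (Pt n)) :=
  {t | t ∈ K.faces ∧ t.card = 3 ∧ e ⊆ t}

/-- An edge of `K` contained in exactly one triangle. -/
def IsBoundaryEdge (K : SimplicialComplex ℝ (Pt n)) (e : Finset (Pt n)) : Prop :=
  e ∈ K.faces ∧ e.card = 2 ∧ (trianglesContaining K e).ncard = 1

/-- An edge of `K` contained in exactly two triangles. -/
def IsInteriorEdge (K : SimplicialComplex ℝ (Pt n)) (e : Finset (Pt n)) : Prop :=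
  e ∈ K.faces ∧ e.card = 2 ∧ (trianglesContaining K e).ncard = 2

/-- The closed upper half-plane `{(a, b) ∈ ℝ² : b ≥ 0}`. -/
def HalfPlane : Set (ℝ × ℝ) := {p | 0 ≤ p.2}

/-- `x` has a neighborhood in `|K|` homeomorphic to an open subset of `ℝ²`. -/
def HasPlanarNbhd (K : SimplicialComplex ℝ (Pt n)) (x : Pt n) : Prop :=
  ∃ U : Set (Pt n), U ⊆ K.space ∧ U ∈ nhdsWithin x K.space ∧
    ∃ V : Set (ℝ × ℝ), IsOpen V ∧ Nonempty (↥U ≃ₜ ↥V)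

/-- `x` has a neighborhood in `|K|` homeomorphic to an open subset of the closed half-plane. -/
def HasHalfPlanarNbhd (K : SimplicialComplex ℝ (Pt n)) (x : Pt n) : Prop :=
  ∃ U : Set (Pt n), U ⊆ K.space ∧ U ∈ nhdsWithin x K.space ∧
    ∃ V : Set ↥HalfPlane, IsOpen V ∧ Nonempty (↥U ≃ₜ ↥V)

/-- `x` is a locally planar point of `|K|`. -/
def IsLocallyPlanarPt (K : SimplicialComplex ℝ (Pt n)) (x : Pt n) : Prop :=
  x ∈ K.space ∧ (HasPlanarNbhd K x ∨ HasHalfPlanarNbhd K x)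

/-- `K` is locally planar if every point of `|K|` is locally planar. -/
def LocallyPlanar (K : SimplicialComplex ℝ (Pt n)) : Prop :=
  ∀ x ∈ K.space, IsLocallyPlanarPt K x

/-- The vertices `a` of `K` such that `{v, a}` is an edge of `K`. -/
def linkVertices (K : SimplicialComplex ℝ (Pt n)) (v : Pt n) : Set (Pt n) :=
  {a | a ≠ v ∧ ∃ s ∈ K.faces, (s : Set (Pt n)) = {v, a}}

/-- The link graph `L(v)`: vertices are the `a` with `{v, a}` an edge of `K`, and `a`, `b`
are adjacent iff `{v, a, b}` is a triangle of `K`. -/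
def linkGraph (K : SimplicialComplex ℝ (Pt n)) (v : Pt n) :
    SimpleGraph (linkVertices K v) where
  Adj a b := (a : Pt n) ≠ (b : Pt n) ∧
    ∃ t ∈ K.faces, t.card = 3 ∧ (t : Set (Pt n)) = {v, (a : Pt n), (b : Pt n)}
  symm := by
    constructor
    rintro a b ⟨hne, t, ht, hc, hset⟩
    exact ⟨fun h => hne h.symm, t, ht, hc, by rw [hset, Set.pair_comm]⟩
  loopless := by constructor; rintro a ⟨hne, -⟩; exact hne rfl

/-- The vertices of `K` lying on some boundary edge. -/
def boundaryVertices (K : SimplicialComplex ℝ (Pt n)) : Set (Pt n) :=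
  {v | ∃ e, IsBoundaryEdge K e ∧ v ∈ e}

/-- The boundary graph of `K`: the simple graph formed by the boundary edges of `K`
and their endpoints. -/
def boundaryGraph (K : SimplicialComplex ℝ (Pt n)) :
    SimpleGraph (boundaryVertices K) where
  Adj u v := (u : Pt n) ≠ (v : Pt n) ∧
    ∃ e, IsBoundaryEdge K e ∧ (e : Set (Pt n)) = {(u : Pt n), (v : Pt n)}
  symm := by
    constructor
    rintro u v ⟨hne, e, he, hset⟩
    exact ⟨fun h => hne h.symm, e, he, by rw [hset, Set.pair_comm]⟩
  loopless := by constructor; rintro u ⟨hne, -⟩; exact hne rfl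

/-- The Euler characteristic `χ(K) = V - E + F`. -/
noncomputable def eulerChar (K : SimplicialComplex ℝ (Pt n)) : ℤ :=
  (K.vertices.ncard : ℤ)
    - ({e : Finset (Pt n) | e ∈ K.faces ∧ e.card = 2}.ncard : ℤ)
    + ({t : Finset (Pt n) | t ∈ K.faces ∧ t.card = 3}.ncard : ℤ)

/-- The three directed edges induced on its boundary by the cyclic ordering `(a, b, c)`. -/
def triDirs (o : Pt n × Pt n × Pt n) : Set (Pt n × Pt n) :=
  {(o.1, o.2.1), (o.2.1, o.2.2), (o.2.2, o.1)}

/-- `K` is orientable: one can assign to each triangle a cyclic ordering of its vertices so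
that the two triangles containing any interior edge induce opposite directions on it. -/
def Orientable (K : SimplicialComplex ℝ (Pt n)) : Prop :=
  ∃ ori : Finset (Pt n) → Pt n × Pt n × Pt n,
    (∀ t ∈ K.faces, t.card = 3 →
      (t : Set (Pt n)) = {(ori t).1, (ori t).2.1, (ori t).2.2}) ∧
    (∀ t₁ ∈ K.faces, ∀ t₂ ∈ K.faces, t₁.card = 3 → t₂.card = 3 → t₁ ≠ t₂ →
      ∀ e ∈ K.faces, e.card = 2 → e ⊆ t₁ → e ⊆ t₂ →
      ∀ x y : Pt n, x ∈ e → y ∈ e → x ≠ y →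
        (x, y) ∈ triDirs (ori t₁) → (y, x) ∈ triDirs (ori t₂))

/-- The genus of a topological space `X`: the supremum of the numbers `m` for which there exist
`m` pairwise disjoint subsets of `X`, each homeomorphic to the circle `S¹`, whose union has
connected complement. -/
noncomputable def genus (X : Type*) [TopologicalSpace X] : ℕ :=
  sSup {m : ℕ | ∃ C : Fin m → Set X,
    (Pairwise fun i j => Disjoint (C i) (C j)) ∧
    (∀ i, Nonempty (↥(C i) ≃ₜ ↥(Metric.sphere (0 : EuclideanSpace ℝ (Fin 2)) 1))) ∧
    IsConnected (⋃ i, C i)ᶜ}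

theorem reachable_of_mem_face (K : SimplicialComplex ℝ (Pt n)) {s : Finset (Pt n)}
    (hs : s ∈ K.faces) (a b : K.vertices) (ha : (a : Pt n) ∈ s) (hb : (b : Pt n) ∈ s) :
    (skeletonGraph K).Reachable a b := by
  classical
  by_cases h : a = b
  · subst h
    exact SimpleGraph.Reachable.refl _
  · apply SimpleGraph.Adj.reachable
    refine ⟨fun h' => h (Subtype.ext h'), {(a : Pt n), (b : Pt n)}, ?_, by simp⟩
    refine K.down_closed hs ?_ (by simp)
    intro x hx
    simp only [Finset.mem_insert, Finset.mem_singleton] at hx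
    rcases hx with rfl | rfl <;> assumption

theorem mem_vertices_of_mem_face (K : SimplicialComplex ℝ (Pt n)) {s : Finset (Pt n)}
    (hs : s ∈ K.faces) {a : Pt n} (ha : a ∈ s) : a ∈ K.vertices :=
  K.down_closed hs (Finset.singleton_subset_iff.2 ha) (Finset.singleton_nonempty _)

theorem isClosed_hulls (F : Set (Finset (Pt n))) (hF : F.Finite) :
    IsClosed (⋃ s ∈ F, convexHull ℝ (s : Set (Pt n))) :=
  hF.isClosed_biUnion fun s _ => (s.finite_toSet.isCompact_convexHull ℝ).isClosed

/-- `|K|` is a connected topological space iff the 1-skeleton graph is connected. -/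
theorem space_connected_iff_skeleton_connected (K : SimplicialComplex ℝ (Pt n))
    (hfin : K.faces.Finite) (hne : K.faces.Nonempty) :
    ConnectedSpace ↥K.space ↔ (skeletonGraph K).Connected := by
  classical
  rw [← isConnected_iff_connectedSpace]
  obtain ⟨s₀, hs₀⟩ := hne
  obtain ⟨u₀, hu₀⟩ := K.nonempty_of_mem_faces hs₀
  have hv₀ := mem_vertices_of_mem_face K hs₀ hu₀
  constructor
  · rintro ⟨-, hc⟩
    haveI : Nonempty K.vertices := ⟨⟨u₀, hv₀⟩⟩
    refine SimpleGraph.Connected.mk ?_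
    intro u v
    by_contra huv
    let P : Finset (Pt n) → Prop := fun s =>
      ∃ w : K.vertices, (w : Pt n) ∈ s ∧ (skeletonGraph K).Reachable u w
    have hA := isClosed_hulls {s | s ∈ K.faces ∧ P s} (hfin.subset fun s h => h.1)
    have hB := isClosed_hulls {s | s ∈ K.faces ∧ ¬ P s} (hfin.subset fun s h => h.1)
    obtain ⟨x, -, hxA, hxB⟩ := isPreconnected_closed_iff.1 hc _ _ hA hB
      (by
        intro x hx
        obtain ⟨s, hs, hxs⟩ := K.mem_space_iff.1 hx
        by_cases hP : P s
        · exact Or.inl (Set.mem_biUnion (show s ∈ {s | s ∈ K.faces ∧ P s} from ⟨hs, hP⟩) hxs)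
        · exact Or.inr (Set.mem_biUnion (show s ∈ {s | s ∈ K.faces ∧ ¬ P s} from ⟨hs, hP⟩) hxs))
      ⟨u, K.vertices_subset_space u.2,
        Set.mem_biUnion (show {(u : Pt n)} ∈ {s | s ∈ K.faces ∧ P s} from
          ⟨u.2, u, by simp, SimpleGraph.Reachable.refl _⟩) (subset_convexHull ℝ _ (by simp))⟩
      ⟨v, K.vertices_subset_space v.2,
        Set.mem_biUnion (show {(v : Pt n)} ∈ {s | s ∈ K.faces ∧ ¬ P s} from
          ⟨v.2, by
            rintro ⟨w, hw, hr⟩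
            have : w = v := Subtype.ext (by simpa using hw)
            exact huv (this ▸ hr)⟩) (subset_convexHull ℝ _ (by simp))⟩
    obtain ⟨s, ⟨hs, w, hws, hr⟩, hxs⟩ := Set.mem_iUnion₂.1 hxA
    obtain ⟨t, ⟨ht, hPt⟩, hxt⟩ := Set.mem_iUnion₂.1 hxB
    have hx := K.inter_subset_convexHull hs ht ⟨hxs, hxt⟩
    obtain ⟨y, hys, hyt⟩ := convexHull_nonempty_iff.1 ⟨x, hx⟩
    exact hPt ⟨⟨y, mem_vertices_of_mem_face K hs hys⟩, hyt,
      hr.trans (reachable_of_mem_face K hs _ _ hws hys)⟩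
  · intro hG
    have h0 : u₀ ∈ K.space := K.vertices_subset_space hv₀
    have step : ∀ s ∈ K.faces, ∀ v ∈ s, v ∈ connectedComponentIn K.space u₀ →
        convexHull ℝ (s : Set (Pt n)) ⊆ connectedComponentIn K.space u₀ := by
      intro s hs v hv hvc
      rw [connectedComponentIn_eq hvc]
      exact (convex_convexHull ℝ _).isPreconnected.subset_connectedComponentIn
        (subset_convexHull ℝ _ hv) (K.convexHull_subset_space hs)
    have hall : ∀ v : K.vertices, (v : Pt n) ∈ connectedComponentIn K.space u₀ := by
      intro v
      obtain ⟨p⟩ := hG.preconnected v ⟨u₀, hv₀⟩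
      suffices H : ∀ (a b : K.vertices), (skeletonGraph K).Walk a b →
          (b : Pt n) ∈ connectedComponentIn K.space u₀ →
          (a : Pt n) ∈ connectedComponentIn K.space u₀ from
        H _ _ p (mem_connectedComponentIn h0)
      intro a b p
      induction p with
      | nil => exact id
      | cons h p ih =>
        intro hb
        obtain ⟨-, s, hs, he⟩ := h
        refine step s hs _ ?_ (ih hb) (subset_convexHull ℝ _ ?_)
        · rw [← Finset.mem_coe, he]; simp
        · rw [he]; simp
    have heq : connectedComponentIn K.space u₀ = K.space := by
      apply (connectedComponentIn_subset _ _).antisymm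
      intro x hx
      obtain ⟨s, hs, hxs⟩ := K.mem_space_iff.1 hx
      obtain ⟨v, hv⟩ := K.nonempty_of_mem_faces hs
      exact step s hs v hv (hall ⟨v, mem_vertices_of_mem_face K hs hv⟩) hxs
    rw [← heq]
    exact isConnected_connectedComponentIn_iff.2 h0

end PaperAlg
end

section
/- Let K be a finite 2-dimensional geometric simplicial complex in ℝⁿ, let e = {p, q} be an edge of K, and let x = (p + q)/2 be its midpoint. Then x is a locally planar point of |K| if and only if the number of triangles of K containing e is exactly one or exactly two. -/
open Geometry

namespace PaperAlg

variable {n : ℕ}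

section Helpers
open Metric Set

def HasLogS (g : ℂ → ℂ) : Prop :=
  ∃ L : ℂ → ℂ, ContinuousOn L (sphere 0 1) ∧ ∀ z ∈ sphere (0:ℂ) 1, Complex.exp (L z) = g z

lemma hasLogS_homotopy (H : ℝ × ℂ → ℂ)
    (hc : ContinuousOn H (Icc 0 1 ×ˢ sphere 0 1))
    (hn : ∀ t ∈ Icc (0:ℝ) 1, ∀ z ∈ sphere (0:ℂ) 1, H (t, z) ≠ 0)
    (h0 : HasLogS (fun z => H (0, z))) : HasLogS (fun z => H (1, z)) := by
  have hK : IsCompact (Icc (0:ℝ) 1 ×ˢ sphere (0:ℂ) 1) :=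
    isCompact_Icc.prod (isCompact_sphere 0 1)
  have hm : ∃ m > 0, ∀ x ∈ Icc (0:ℝ) 1 ×ˢ sphere (0:ℂ) 1, m ≤ ‖H x‖ := by
    obtain ⟨x0, hx0, hmin⟩ := hK.exists_isMinOn ⟨(0, 1), by simp⟩ hc.norm
    exact ⟨‖H x0‖, norm_pos_iff.2 (hn x0.1 hx0.1 x0.2 hx0.2), fun x hx => hmin hx⟩
  obtain ⟨m, hm0, hm⟩ := hm
  have huc := hK.uniformContinuousOn_of_continuous hc
  obtain ⟨δ, hδ, huc⟩ := Metric.uniformContinuousOn_iff.1 huc m hm0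
  obtain ⟨N, hN⟩ := exists_nat_one_div_lt hδ
  have hNpos : (0:ℝ) < (N:ℝ) + 1 := by positivity
  have key : ∀ k : ℕ, k ≤ N + 1 → HasLogS (fun z => H ((k:ℝ) / (N + 1), z)) := by
    intro k
    induction k with
    | zero => intro _; simpa using h0
    | succ k ih =>
      intro hk
      obtain ⟨L, hL, hLe⟩ := ih (by omega)
      have hk' : (k:ℝ) + 1 ≤ N + 1 := by exact_mod_cast hk
      have ha : (k:ℝ) / (N + 1) ∈ Icc (0:ℝ) 1 :=
        ⟨by positivity, by rw [div_le_one hNpos]; linarith⟩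
      have hb : ((k:ℝ) + 1) / (N + 1) ∈ Icc (0:ℝ) 1 :=
        ⟨by positivity, by rw [div_le_one hNpos]; linarith⟩
      have hcs : ∀ t ∈ Icc (0:ℝ) 1, ContinuousOn (fun z => H (t, z)) (sphere 0 1) := by
        intro t ht
        exact hc.comp (by fun_prop) (fun z hz => ⟨ht, hz⟩)
      have hsl : ∀ z ∈ sphere (0:ℂ) 1,
          H (((k:ℝ) + 1) / (N + 1), z) / H ((k:ℝ) / (N + 1), z) ∈ Complex.slitPlane := by
        intro z hz
        apply Complex.ball_one_subset_slitPlane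
        have h1 := hn _ ha z hz
        have h2 := hm (_, z) ⟨ha, hz⟩
        have h3 := huc (((k:ℝ) + 1) / (N + 1), z) ⟨hb, hz⟩ ((k:ℝ) / (N + 1), z) ⟨ha, hz⟩ (by
          rw [Prod.dist_eq]
          simp only [dist_self, Real.dist_eq]
          rw [← sub_div, add_sub_cancel_left, max_lt_iff]
          refine ⟨?_, hδ⟩
          rw [abs_of_pos (by positivity)]; exact hN)
        rw [mem_ball, dist_eq_norm, div_sub_one h1, norm_div, div_lt_one (norm_pos_iff.2 h1)]
        rw [dist_eq_norm] at h3
        linarith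
      refine ⟨fun z => L z + Complex.log (H (((k:ℝ) + 1) / (N + 1), z) / H ((k:ℝ) / (N + 1), z)),
        hL.add (ContinuousOn.clog ((hcs _ hb).div (hcs _ ha) (fun z hz => hn _ ha z hz)) hsl), ?_⟩
      intro z hz
      rw [Complex.exp_add, hLe z hz, Complex.exp_log (Complex.slitPlane_ne_zero (hsl z hz))]
      push_cast
      have h1 := hn _ ha z hz
      field_simp
  have := key (N+1) le_rfl
  have e : (((N+1 : ℕ):ℝ)) / ((N:ℝ) + 1) = 1 := by push_cast; field_simp
  rwa [e] at this

lemma not_hasLogS_odd (g : ℂ → ℂ) (hodd : ∀ z ∈ sphere (0:ℂ) 1, g (-z) = - g z)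
 : ¬ HasLogS g := by
  rintro ⟨L, hL, hLe⟩
  have hneg : ∀ z ∈ sphere (0:ℂ) 1, -z ∈ sphere (0:ℂ) 1 := by intro z hz; simpa using hz
  have hex : ∀ z ∈ sphere (0:ℂ) 1, ∃ k : ℤ, L (-z) - L z = (2 * k + 1) * (Real.pi * Complex.I) := by
    intro z hz
    have h : Complex.exp (L (-z)) = Complex.exp (L z + Real.pi * Complex.I) := by
      rw [hLe _ (hneg z hz), hodd z hz, Complex.exp_add, Complex.exp_pi_mul_I, hLe z hz]; ring
    obtain ⟨k, hk⟩ := Complex.exp_eq_exp_iff_exists_int.1 h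
    exact ⟨k, by rw [hk]; ring⟩
  choose! k hk using hex
  have hpi : (Real.pi * Complex.I : ℂ) ≠ 0 := by simp [Real.pi_ne_zero]
  have hconn : IsPreconnected (sphere (0:ℂ) 1) :=
    isPreconnected_sphere (by rw [Complex.rank_real_complex]; norm_num) 0 1
  have hkc : ContinuousOn k (sphere 0 1) := by
    have h1 : ContinuousOn (fun z => (k z : ℂ)) (sphere 0 1) := by
      have : ContinuousOn (fun z => ((L (-z) - L z) / (Real.pi * Complex.I) - 1) / 2)
          (sphere 0 1) := by
        refine ContinuousOn.div_const (ContinuousOn.sub (ContinuousOn.div_const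
          (ContinuousOn.sub (hL.comp (by fun_prop) hneg) hL) _) continuousOn_const) _
      refine this.congr fun z hz => ?_
      simp only []
      rw [hk z hz, mul_div_assoc, div_self hpi]; ring
    have h2 : Topology.IsInducing (fun n : ℤ => (n : ℂ)) := by
      have := Complex.isometry_intCast.isUniformInducing.isInducing
      exact this
    rw [h2.continuousOn_iff]
    exact h1
  have h1 : (1:ℂ) ∈ sphere (0:ℂ) 1 := by simp
  have hcst := hconn.constant hkc h1 (hneg 1 h1)
  have e1 := hk 1 h1
  have e2 := hk (-1) (hneg 1 h1)
  rw [neg_neg, ← hcst] at e2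
  have : (2 * ((2 * k 1 + 1 : ℤ) : ℂ)) * (Real.pi * Complex.I) = 0 := by
    push_cast; linear_combination -e1 - e2
  rcases mul_eq_zero.1 this with h | h
  · have : (2 * k 1 + 1 : ℤ) = 0 := by
      rcases mul_eq_zero.1 h with h | h
      · norm_num at h
      · exact_mod_cast h
    omega
  · exact hpi h

lemma invariance_domain (f : ℂ → ℂ) (hc : ContinuousOn f (closedBall 0 1))
    (hi : InjOn f (closedBall 0 1)) : f '' closedBall 0 1 ∈ nhds (f 0) := by
  have hS : ∀ z ∈ sphere (0:ℂ) 1, z ∈ closedBall (0:ℂ) 1 := fun z hz => sphere_subset_closedBall hz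
  have h0 : (0:ℂ) ∈ closedBall (0:ℂ) 1 := by simp
  have hmul : ∀ (s : ℝ), |s| ≤ 1 → ∀ z ∈ sphere (0:ℂ) 1, (s:ℂ) * z ∈ closedBall (0:ℂ) 1 := by
    intro s hs z hz
    rw [mem_sphere_zero_iff_norm] at hz
    rw [mem_closedBall_zero_iff, norm_mul, hz, Complex.norm_real]; simpa using hs
  have hcS : IsClosed (f '' sphere 0 1) :=
    ((isCompact_sphere 0 1).image_of_continuousOn (hc.mono sphere_subset_closedBall)).isClosed
  have h0n : f 0 ∈ (f '' sphere 0 1)ᶜ := by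
    rintro ⟨z, hz, hzz⟩
    have := hi (hS z hz) h0 hzz
    subst this; simp at hz
  obtain ⟨ε, hε, hball⟩ := Metric.isOpen_iff.1 hcS.isOpen_compl _ h0n
  refine Filter.mem_of_superset (ball_mem_nhds _ hε) ?_
  intro c hcb
  by_contra hcn
  have hcne : ∀ z ∈ closedBall (0:ℂ) 1, f z - c ≠ 0 := fun z hz h =>
    hcn ⟨z, hz, sub_eq_zero.1 h⟩
  have l0 : HasLogS (fun z => f (((0:ℝ):ℂ) * z) - c) := by
    refine ⟨fun _ => Complex.log (f 0 - c), continuousOn_const, fun z _ => ?_⟩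
    rw [Complex.exp_log (hcne 0 h0)]; simp
  have l1 := hasLogS_homotopy (fun x => f ((x.1 : ℂ) * x.2) - c)
    (ContinuousOn.sub (hc.comp (by fun_prop) (fun x hx => hmul x.1 (by
      rw [abs_le]; constructor <;> linarith [hx.1.1, hx.1.2]) _ hx.2)) continuousOn_const)
    (fun t ht z hz => hcne _ (hmul t (by
      rw [abs_le]; constructor <;> linarith [ht.1, ht.2]) z hz)) l0
  have l2 := hasLogS_homotopy (fun x => f x.2 - ((1 - x.1 : ℝ) * (c - f 0) + f 0))
    (ContinuousOn.sub (hc.comp (by fun_prop) (fun x hx => hS _ hx.2)) (by fun_prop))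
    (fun t ht z hz h => by
      refine hball (a := ((1 - t : ℝ) * (c - f 0) + f 0)) ?_ ⟨z, hz, sub_eq_zero.1 h⟩
      rw [mem_ball, dist_eq_norm] at hcb ⊢
      rw [add_sub_cancel_right, norm_mul, Complex.norm_real, Real.norm_eq_abs,
        abs_of_nonneg (by linarith [ht.2])]
      nlinarith [ht.1, ht.2, norm_nonneg (c - f 0)])
    (by simpa using l1)
  have hh : ∀ t ∈ Icc (0:ℝ) 1, |1 / (1 + t)| ≤ 1 ∧ |-t / (1+t)| ≤ 1 := by
    intro t ht
    have : 0 < 1 + t := by linarith [ht.1]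
    rw [abs_div, abs_div, abs_of_pos this, abs_neg, abs_of_nonneg ht.1, div_le_one this,
      div_le_one this]
    simp; linarith [ht.1]
  have hct : ContinuousOn (fun x : ℝ × ℂ => 1 / (1 + x.1)) (Icc 0 1 ×ˢ sphere 0 1) :=
    ContinuousOn.div continuousOn_const (by fun_prop) (fun x hx => by linarith [hx.1.1])
  have hct' : ContinuousOn (fun x : ℝ × ℂ => -x.1 / (1 + x.1)) (Icc 0 1 ×ˢ sphere 0 1) :=
    ContinuousOn.div (by fun_prop) (by fun_prop) (fun x hx => by linarith [hx.1.1])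
  have hne3 : ∀ t ∈ Icc (0:ℝ) 1, ∀ z ∈ sphere (0:ℂ) 1,
      f (((1 / (1 + t) : ℝ) : ℂ) * z) - f (((-t / (1 + t) : ℝ) : ℂ) * z) ≠ 0 := by
    intro t ht z hz h
    have := hi (hmul _ (hh t ht).1 z hz) (hmul _ (hh t ht).2 z hz) (sub_eq_zero.1 h)
    have hz0 : z ≠ 0 := by rintro rfl; simp at hz
    have h2 := mul_right_cancel₀ hz0 this
    have h3 : 1 / (1 + t) = -t / (1 + t) := by exact_mod_cast h2
    have : 0 < 1 + t := by linarith [ht.1]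
    field_simp at h3
    linarith [ht.1]
  have l3 := hasLogS_homotopy
    (fun x => f (((1 / (1 + x.1) : ℝ) : ℂ) * x.2) - f (((-x.1 / (1 + x.1) : ℝ) : ℂ) * x.2))
    (ContinuousOn.sub
      (hc.comp ((Complex.continuous_ofReal.comp_continuousOn hct).mul continuousOn_snd)
        (fun x hx => hmul _ (hh _ hx.1).1 _ hx.2))
      (hc.comp ((Complex.continuous_ofReal.comp_continuousOn hct').mul continuousOn_snd)
        (fun x hx => hmul _ (hh _ hx.1).2 _ hx.2)))
    hne3 (by simpa using l2)
  refine not_hasLogS_odd _ ?_ l3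
  intro z hz
  have : ((-1 / (1 + 1) : ℝ) : ℂ) = -((1 / (1 + 1) : ℝ) : ℂ) := by push_cast; ring
  simp only [this]
  rw [neg_mul, neg_mul, mul_neg, neg_neg]
  ring

/-! ### Parametrization of pages -/

/-- Parametrization of the triangle `p q r` around the midpoint of `p q`. -/
noncomputable def page (p q r : Pt n) (v : ℝ × ℝ) : Pt n :=
  (1/2 - v.1 - v.2/2) • p + (1/2 + v.1 - v.2/2) • q + v.2 • r

lemma page_zero (p q r : Pt n) : page p q r (0, 0) = midpoint ℝ p q := by
  simp [page, midpoint_eq_smul_add, smul_add]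

lemma page_continuous (p q r : Pt n) : Continuous (page p q r) := by
  unfold page; fun_prop

lemma page_mem {p q r : Pt n} {s t : ℝ} (ht : 0 ≤ t) (hst : 2 * |s| + t ≤ 1) :
    page p q r (s, t) ∈ convexHull ℝ ({p, q, r} : Set (Pt n)) := by
  have hc := convex_convexHull ℝ ({p, q, r} : Set (Pt n))
  have hp : p ∈ convexHull ℝ ({p, q, r} : Set (Pt n)) := subset_convexHull ℝ _ (by simp)
  have hq : q ∈ convexHull ℝ ({p, q, r} : Set (Pt n)) := subset_convexHull ℝ _ (by simp)
  have hr : r ∈ convexHull ℝ ({p, q, r} : Set (Pt n)) := subset_convexHull ℝ _ (by simp)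
  have h1 := le_abs_self s
  have h2 := neg_abs_le s
  have := hc.sum_mem (t := Finset.univ) (w := ![1/2 - s - t/2, 1/2 + s - t/2, t])
    (z := ![p, q, r]) (by
      intro i _; fin_cases i <;> simp <;> linarith) (by
      simp [Fin.sum_univ_three]; ring) (by
      intro i _; fin_cases i <;> simpa)
  simpa [Fin.sum_univ_three, page] using this

lemma page_surj {p q r y : Pt n} (hy : y ∈ convexHull ℝ ({p, q, r} : Set (Pt n))) :
    ∃ s t : ℝ, 0 ≤ t ∧ 2 * |s| + t ≤ 1 ∧ page p q r (s, t) = y := by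
  rw [convexHull_insert (by simp), mem_convexJoin] at hy
  obtain ⟨a, ha, b, hb, hy⟩ := hy
  rw [mem_singleton_iff] at ha
  subst ha
  rw [convexHull_pair] at hb
  obtain ⟨c1, c2, h1, h2, h12, rfl⟩ := hb
  obtain ⟨d1, d2, g1, g2, g12, rfl⟩ := hy
  have k1 : 0 ≤ d2 * c1 := by positivity
  have k2 : 0 ≤ d2 * c2 := by positivity
  have k3 : d2 * c1 + d2 * c2 = d2 := by rw [← mul_add, h12, mul_one]
  refine ⟨(d2 * c1 - d1) / 2, d2 * c2, k2, ?_, ?_⟩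
  · have : 2 * |(d2 * c1 - d1) / 2| = |d2 * c1 - d1| := by
      rw [abs_div]; simp; ring
    rw [this]
    have : |d2 * c1 - d1| ≤ d2 * c1 + d1 := abs_le.2 ⟨by linarith, by linarith⟩
    linarith
  · have e1 : 1/2 - (d2 * c1 - d1) / 2 - d2 * c2 / 2 = d1 := by linarith
    have e2 : 1/2 + (d2 * c1 - d1) / 2 - d2 * c2 / 2 = d2 * c1 := by linarith
    simp only [page, e1, e2, smul_add, smul_smul, add_assoc]

lemma page_inj {p q r : Pt n} (hi : AffineIndependent ℝ ![p, q, r]) {v w : ℝ × ℝ}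
    (h : page p q r v = page p q r w) : v = w := by
  rw [affineIndependent_iff] at hi
  have := hi Finset.univ ![(1/2 - v.1 - v.2/2) - (1/2 - w.1 - w.2/2),
    (1/2 + v.1 - v.2/2) - (1/2 + w.1 - w.2/2), v.2 - w.2]
    (by simp [Fin.sum_univ_three]; ring)
    (by
      simp only [Fin.sum_univ_three, Matrix.cons_val_zero, Matrix.cons_val_one, Matrix.cons_val]
      simp only [page] at h
      rw [← sub_eq_zero] at h
      rw [← h]; module)
  have h1 := this 1 (Finset.mem_univ _)
  have h2 := this 2 (Finset.mem_univ _)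
  simp at h1 h2
  ext <;> linarith

lemma segment_page {p q : Pt n} (r : Pt n) {y : Pt n}
    (hy : y ∈ convexHull ℝ ({p, q} : Set (Pt n))) : ∃ s : ℝ, page p q r (s, 0) = y := by
  rw [convexHull_pair] at hy
  obtain ⟨a, b, ha, hb, hab, rfl⟩ := hy
  refine ⟨(b - a)/2, ?_⟩
  have e1 : 1/2 - (b - a)/2 - 0/2 = a := by linarith
  have e2 : 1/2 + (b - a)/2 - 0/2 = b := by linarith
  simp only [page, e1, e2, zero_smul, add_zero]

/-! ### Local structure -/

lemma triangle_shape {K : SimplicialComplex ℝ (Pt n)} {e t : Finset (Pt n)} {p q : Pt n}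
    (hpq : p ≠ q) (hepq : (e : Set (Pt n)) = {p, q}) (ht : t ∈ trianglesContaining K e) :
    ∃ r, (t : Set (Pt n)) = {p, q, r} ∧ r ∉ e ∧ AffineIndependent ℝ ![p, q, r] := by
  classical
  obtain ⟨htf, hc, het⟩ := ht
  have hp : p ∈ e := by rw [← Finset.mem_coe, hepq]; simp
  have hq : q ∈ e := by rw [← Finset.mem_coe, hepq]; simp
  have he2 : e = {p, q} := by rw [← Finset.coe_inj, hepq]; simp
  have hec : e.card = 2 := by rw [he2, Finset.card_pair hpq]
  have : (t \ e).card = 1 := by rw [Finset.card_sdiff_of_subset het]; omega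
  obtain ⟨r, hr⟩ := Finset.card_eq_one.1 this
  have hrm : r ∈ t \ e := by rw [hr]; simp
  rw [Finset.mem_sdiff] at hrm
  refine ⟨r, ?_, hrm.2, ?_⟩
  · have : t = {p, q, r} := by
      rw [← Finset.sdiff_union_of_subset het, hr, he2]
      ext; simp; tauto
    rw [this]; simp
  · have hrp : p ≠ r := by rintro rfl; exact hrm.2 hp
    have hrq : q ≠ r := by rintro rfl; exact hrm.2 hq
    have hinj : Function.Injective
        (![⟨p, het hp⟩, ⟨q, het hq⟩, ⟨r, hrm.1⟩] : Fin 3 → t) := by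
      intro i j hij
      fin_cases i <;> fin_cases j <;> simp_all
    have := (K.indep htf).comp_embedding ⟨_, hinj⟩
    have hfun : (fun a : t => (a : Pt n)) ∘
        (![⟨p, het hp⟩, ⟨q, het hq⟩, ⟨r, hrm.1⟩] : Fin 3 → t) = ![p, q, r] := by
      ext1 i
      fin_cases i <;> rfl
    rw [← hfun]
    exact this

lemma midpoint_mem_face {K : SimplicialComplex ℝ (Pt n)} {e s : Finset (Pt n)} {p q : Pt n}
    (he : e ∈ K.faces) (hpq : p ≠ q) (hepq : (e : Set (Pt n)) = {p, q}) (hs : s ∈ K.faces)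
    (hx : midpoint ℝ p q ∈ convexHull ℝ (s : Set (Pt n))) : e ⊆ s := by
  have hxe : midpoint ℝ p q ∈ convexHull ℝ (e : Set (Pt n)) := by
    rw [hepq, convexHull_pair]; exact midpoint_mem_segment p q
  have h := K.inter_subset_convexHull he hs ⟨hxe, hx⟩
  have hmp : midpoint ℝ p q ≠ p := by simpa [midpoint_eq_left_iff] using hpq
  have hmq : midpoint ℝ p q ≠ q := by simpa [midpoint_eq_right_iff] using hpq
  rw [hepq] at h
  rw [← Finset.coe_subset, hepq]
  intro a ha
  by_contra hns
  have key : ∀ b : Pt n, ({p, q} ∩ (s : Set (Pt n)) : Set (Pt n)) ⊆ {b} → midpoint ℝ p q = b := by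
    intro b hb
    have := convexHull_mono (𝕜 := ℝ) hb h
    simpa using this
  rcases ha with rfl | ha
  · refine hmq (key q ?_)
    rintro b ⟨rfl | hb, hbs⟩
    · exact absurd hbs hns
    · exact hb
  · rw [mem_singleton_iff] at ha
    subst ha
    refine hmp (key p ?_)
    rintro b ⟨rfl | hb, hbs⟩
    · rfl
    · rw [mem_singleton_iff] at hb; subst hb; exact absurd hbs hns

lemma local_structure {K : SimplicialComplex ℝ (Pt n)} (hfin : K.faces.Finite)
    {e : Finset (Pt n)} {p q : Pt n}
    (he : e ∈ K.faces) (hpq : p ≠ q) (hepq : (e : Set (Pt n)) = {p, q}) :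
    ∀ᶠ y in nhds (midpoint ℝ p q), y ∈ K.space →
      ∃ s ∈ K.faces, e ⊆ s ∧ y ∈ convexHull ℝ (s : Set (Pt n)) := by
  have hF : (K.faces ∩ {s | ¬ e ⊆ s}).Finite := hfin.subset inter_subset_left
  have hcl : IsClosed (⋃ s ∈ K.faces ∩ {s | ¬ e ⊆ s}, convexHull ℝ (s : Set (Pt n))) :=
    hF.isClosed_biUnion fun s _ => (s.finite_toSet.isCompact_convexHull ℝ).isClosed
  have hm : midpoint ℝ p q ∈ (⋃ s ∈ K.faces ∩ {s | ¬ e ⊆ s}, convexHull ℝ (s : Set (Pt n)))ᶜ := by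
    intro h
    simp only [mem_iUnion] at h
    obtain ⟨s, hs, hx⟩ := h
    exact hs.2 (midpoint_mem_face he hpq hepq hs.1 hx)
  filter_upwards [hcl.isOpen_compl.mem_nhds hm] with y hy hyK
  obtain ⟨s, hs, hys⟩ := SimplicialComplex.mem_space_iff.1 hyK
  refine ⟨s, hs, ?_, hys⟩
  by_contra hes
  exact hy (mem_biUnion (show s ∈ K.faces ∩ {s | ¬ e ⊆ s} from ⟨hs, hes⟩) hys)

lemma local_structure' {K : SimplicialComplex ℝ (Pt n)} (hfin : K.faces.Finite)
    (hdim : TwoDimensional K) {e : Finset (Pt n)} {p q : Pt n}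
    (he : e ∈ K.faces) (hpq : p ≠ q) (hepq : (e : Set (Pt n)) = {p, q}) :
    ∀ᶠ y in nhds (midpoint ℝ p q), y ∈ K.space →
      y ∈ convexHull ℝ (e : Set (Pt n)) ∨
      ∃ s ∈ trianglesContaining K e, y ∈ convexHull ℝ (s : Set (Pt n)) := by
  classical
  have he2 : e = {p, q} := by rw [← Finset.coe_inj, hepq]; simp
  have hec : e.card = 2 := by rw [he2, Finset.card_pair hpq]
  filter_upwards [local_structure hfin he hpq hepq] with y hy hyK
  obtain ⟨s, hs, hes, hys⟩ := hy hyK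
  have h1 := hdim s hs
  have h2 := Finset.card_le_card hes
  by_cases h3 : s.card = 3
  · exact Or.inr ⟨s, ⟨hs, h3, hes⟩, hys⟩
  · left
    rwa [Finset.eq_of_subset_of_card_le hes (by omega)]

lemma page_cross {K : SimplicialComplex ℝ (Pt n)} {e t₁ t₂ : Finset (Pt n)} {p q r : Pt n}
    (hepq : (e : Set (Pt n)) = {p, q})
    (h1 : t₁ ∈ trianglesContaining K e) (h2 : t₂ ∈ trianglesContaining K e) (hne : t₁ ≠ t₂)
    (hr : (t₁ : Set (Pt n)) = {p, q, r}) (hi : AffineIndependent ℝ ![p, q, r]) {s t : ℝ}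
    (ht : 0 ≤ t) (hst : 2 * |s| + t ≤ 1)
    (hmem : page p q r (s, t) ∈ convexHull ℝ (t₂ : Set (Pt n))) : t = 0 := by
  have hm1 : page p q r (s, t) ∈ convexHull ℝ (t₁ : Set (Pt n)) := by
    rw [hr]; exact page_mem ht hst
  have h := K.inter_subset_convexHull h1.1 h2.1 ⟨hm1, hmem⟩
  have hrn : r ∉ t₂ := by
    intro hrt
    apply hne
    apply Finset.eq_of_subset_of_card_le
    · rw [← Finset.coe_subset, hr]
      have := Finset.coe_subset.2 h2.2.2
      rw [hepq] at this
      rintro a (rfl | rfl | ha)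
      · exact this (by simp)
      · exact this (by simp)
      · rw [mem_singleton_iff] at ha; subst ha; exact hrt
    · rw [h1.2.1, h2.2.1]
  have hsub : ((t₁ : Set (Pt n)) ∩ t₂) ⊆ {p, q} := by
    rw [hr]
    rintro a ⟨rfl | rfl | ha, ha2⟩
    · simp
    · simp
    · rw [mem_singleton_iff] at ha; subst ha; exact absurd ha2 hrn
  obtain ⟨s', hs'⟩ := segment_page r (convexHull_mono hsub h)
  have := page_inj hi hs'
  exact (congrArg Prod.snd this).symm

/-- The two-page map. -/
noncomputable def book (p q r₁ r₂ : Pt n) (v : ℝ × ℝ) : Pt n :=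
  (1/2 - v.1 - |v.2|/2) • p + (1/2 + v.1 - |v.2|/2) • q + max v.2 0 • r₁ + max (-v.2) 0 • r₂

lemma book_continuous (p q r₁ r₂ : Pt n) : Continuous (book p q r₁ r₂) := by
  unfold book; fun_prop

lemma book_nonneg {p q r₁ r₂ : Pt n} {s t : ℝ} (ht : 0 ≤ t) :
    book p q r₁ r₂ (s, t) = page p q r₁ (s, t) := by
  simp [book, page, abs_of_nonneg ht, max_eq_left ht, max_eq_right (neg_nonpos.2 ht)]

lemma book_nonpos {p q r₁ r₂ : Pt n} {s t : ℝ} (ht : t ≤ 0) :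
    book p q r₁ r₂ (s, t) = page p q r₂ (s, -t) := by
  simp [book, page, abs_of_nonpos ht, max_eq_right ht, max_eq_left (neg_nonneg.2 ht)]

/-- The rhombus. -/
def rhomb : Set (ℝ × ℝ) := {v | 2 * |v.1| + |v.2| ≤ 1}

lemma rhomb_compact : IsCompact rhomb := by
  refine Metric.isCompact_of_isClosed_isBounded ?_ ?_
  · exact isClosed_le (by fun_prop) (by fun_prop)
  · refine (Metric.isBounded_closedBall (x := (0 : ℝ × ℝ)) (r := 1)).subset ?_
    intro v hv
    have hv' : 2 * |v.1| + |v.2| ≤ 1 := hv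
    rw [mem_closedBall_zero_iff, Prod.norm_def, max_le_iff, Real.norm_eq_abs, Real.norm_eq_abs]
    constructor <;> linarith [abs_nonneg v.1, abs_nonneg v.2]

lemma book_image {p q r₁ r₂ : Pt n} : book p q r₁ r₂ '' rhomb =
    convexHull ℝ ({p, q, r₁} : Set (Pt n)) ∪ convexHull ℝ ({p, q, r₂} : Set (Pt n)) := by
  ext y
  constructor
  · rintro ⟨⟨s, t⟩, hv, rfl⟩
    have hv' : 2 * |s| + |t| ≤ 1 := hv
    rcases le_total 0 t with ht | ht
    · rw [abs_of_nonneg ht] at hv'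
      rw [book_nonneg ht]
      exact Or.inl (page_mem ht hv')
    · rw [abs_of_nonpos ht] at hv'
      rw [book_nonpos ht]
      exact Or.inr (page_mem (by linarith) hv')
  · rintro (hy | hy)
    · obtain ⟨s, t, ht, hst, rfl⟩ := page_surj hy
      refine ⟨(s, t), ?_, book_nonneg ht⟩
      change 2 * |s| + |t| ≤ 1
      rwa [abs_of_nonneg ht]
    · obtain ⟨s, t, ht, hst, rfl⟩ := page_surj hy
      refine ⟨(s, -t), ?_, ?_⟩
      · change 2 * |s| + |-t| ≤ 1
        rwa [abs_neg, abs_of_nonneg ht]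
      · rw [book_nonpos (by linarith), neg_neg]

lemma book_injOn {K : SimplicialComplex ℝ (Pt n)} {e t₁ t₂ : Finset (Pt n)} {p q r₁ r₂ : Pt n}
    (hepq : (e : Set (Pt n)) = {p, q})
    (h1 : t₁ ∈ trianglesContaining K e) (h2 : t₂ ∈ trianglesContaining K e) (hne : t₁ ≠ t₂)
    (hr₁ : (t₁ : Set (Pt n)) = {p, q, r₁}) (hi₁ : AffineIndependent ℝ ![p, q, r₁])
    (hr₂ : (t₂ : Set (Pt n)) = {p, q, r₂}) (hi₂ : AffineIndependent ℝ ![p, q, r₂]) :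
    InjOn (book p q r₁ r₂) rhomb := by
  have cross : ∀ s t s' t' : ℝ, 0 ≤ t → t' ≤ 0 → (s, t) ∈ rhomb → (s', t') ∈ rhomb →
      book p q r₁ r₂ (s, t) = book p q r₁ r₂ (s', t') → (s, t) = (s', t') := by
    intro s t s' t' ht ht' hv hv' h
    replace hv : 2 * |s| + |t| ≤ 1 := hv
    replace hv' : 2 * |s'| + |t'| ≤ 1 := hv'
    rw [abs_of_nonneg ht] at hv
    rw [abs_of_nonpos ht'] at hv'
    rw [book_nonneg ht, book_nonpos ht'] at h
    have e1 : t = 0 := page_cross hepq h1 h2 hne hr₁ hi₁ ht hv (by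
      rw [h, hr₂]; exact page_mem (by linarith) hv')
    have e2 : -t' = 0 := page_cross hepq h2 h1 hne.symm hr₂ hi₂ (by linarith) hv' (by
      rw [← h, hr₁]; exact page_mem ht hv)
    have e3 : t' = 0 := by linarith
    subst e1 e3
    have h' : page p q r₁ (s, 0) = page p q r₁ (s', 0) := by
      rw [h]; simp [page]
    exact page_inj hi₁ h'
  rintro ⟨s, t⟩ hv ⟨s', t'⟩ hv' h
  rcases le_total 0 t with ht | ht <;> rcases le_total 0 t' with ht' | ht'
  · rw [book_nonneg ht, book_nonneg ht'] at h
    exact page_inj hi₁ h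
  · exact cross _ _ _ _ ht ht' hv hv' h
  · exact (cross _ _ _ _ ht' ht hv' hv h.symm).symm
  · rw [book_nonpos ht, book_nonpos ht'] at h
    have := page_inj hi₂ h
    simp only [Prod.mk.injEq, neg_inj] at this
    rw [this.1, this.2]

/-! ### The positive direction -/

lemma embed_lemma {Q O : Set (ℝ × ℝ)} (hQ : IsCompact Q) (hO : IsOpen O) {A : ℝ × ℝ → Pt n}
    (hA : Continuous A) (hi : InjOn A Q) :
    Nonempty (↥(A '' (Q ∩ O)) ≃ₜ ↥(Q ∩ O)) ∧
      ∀ v ∈ Q ∩ O, A '' (Q ∩ O) ∈ nhdsWithin (A v) (A '' Q) := by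
  constructor
  · have := isCompact_iff_compactSpace.1 hQ
    have h1 : Topology.IsClosedEmbedding (Q.domRestrict A) :=
      (hA.comp continuous_subtype_val).isClosedEmbedding (injOn_iff_injective.1 hi)
    have h2 := h1.isEmbedding.comp
      (Topology.IsEmbedding.inclusion (inter_subset_left : Q ∩ O ⊆ Q))
    have hr : range (Q.domRestrict A ∘ inclusion (inter_subset_left : Q ∩ O ⊆ Q)) =
        A '' (Q ∩ O) := by
      ext y; constructor
      · rintro ⟨v, rfl⟩; exact ⟨v, v.2, rfl⟩
      · rintro ⟨v, hv, rfl⟩; exact ⟨⟨v, hv⟩, rfl⟩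
    exact ⟨((h2.toHomeomorph).trans (Homeomorph.setCongr hr)).symm⟩
  · intro v hv
    have hcl : IsClosed (A '' (Q \ O)) := ((hQ.diff hO).image hA).isClosed
    have hvn : A v ∈ (A '' (Q \ O))ᶜ := by
      rintro ⟨w, hw, hwv⟩
      have := hi hw.1 hv.1 hwv
      subst this
      exact hw.2 hv.2
    rw [mem_nhdsWithin]
    refine ⟨_, hcl.isOpen_compl, hvn, ?_⟩
    rintro _ ⟨hy, w, hw, rfl⟩
    refine ⟨w, ⟨hw, ?_⟩, rfl⟩
    by_contra hwO
    exact hy ⟨w, ⟨hw, hwO⟩, rfl⟩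

lemma nhds_lift {K : SimplicialComplex ℝ (Pt n)} {x : Pt n} {U T : Set (Pt n)}
    (hU : U ∈ nhdsWithin x T) (hT : ∀ᶠ y in nhds x, y ∈ K.space → y ∈ T) :
    U ∈ nhdsWithin x K.space := by
  rw [mem_nhdsWithin_iff_eventually] at hU ⊢
  filter_upwards [hU, hT] with y h1 h2 h3
  exact h1 (h2 h3)

lemma case_two {K : SimplicialComplex ℝ (Pt n)} (hfin : K.faces.Finite)
    (hdim : TwoDimensional K) {e : Finset (Pt n)} {p q : Pt n}
    (he : e ∈ K.faces) (hpq : p ≠ q) (hepq : (e : Set (Pt n)) = {p, q})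
    (h : (trianglesContaining K e).ncard = 2) : HasPlanarNbhd K (midpoint ℝ p q) := by
  obtain ⟨t₁, t₂, hne, hset⟩ := Set.ncard_eq_two.1 h
  have h1 : t₁ ∈ trianglesContaining K e := by rw [hset]; simp
  have h2 : t₂ ∈ trianglesContaining K e := by rw [hset]; simp
  obtain ⟨r₁, hr₁, -, hi₁⟩ := triangle_shape hpq hepq h1
  obtain ⟨r₂, hr₂, -, hi₂⟩ := triangle_shape hpq hepq h2
  have hO : IsOpen {v : ℝ × ℝ | 2 * |v.1| + |v.2| < 1} :=
    isOpen_lt (by fun_prop) (by fun_prop)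
  have hQO : rhomb ∩ {v : ℝ × ℝ | 2 * |v.1| + |v.2| < 1} = {v : ℝ × ℝ | 2 * |v.1| + |v.2| < 1} :=
    inter_eq_right.2 fun v (hv : 2 * |v.1| + |v.2| < 1) => (hv.le : 2 * |v.1| + |v.2| ≤ 1)
  obtain ⟨⟨φ⟩, hn⟩ := embed_lemma rhomb_compact hO (book_continuous p q r₁ r₂)
    (book_injOn hepq h1 h2 hne hr₁ hi₁ hr₂ hi₂)
  have hn0 := hn (0, 0) (by constructor <;> simp [rhomb])
  rw [book_nonneg le_rfl, page_zero] at hn0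
  refine ⟨_, ?_, nhds_lift hn0 ?_, _, hQO.symm.subst (motive := fun X => IsOpen X) hO, ⟨φ⟩⟩
  · refine (image_mono inter_subset_left).trans ?_
    rw [book_image, ← hr₁, ← hr₂]
    exact union_subset (SimplicialComplex.convexHull_subset_space h1.1)
      (SimplicialComplex.convexHull_subset_space h2.1)
  · filter_upwards [local_structure' hfin hdim he hpq hepq] with y hy hyK
    rw [book_image, ← hr₁, ← hr₂]
    rcases hy hyK with hy | ⟨s, hs, hy⟩
    · exact Or.inl (convexHull_mono (Finset.coe_subset.2 h1.2.2) hy)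
    · rw [hset] at hs
      rcases hs with rfl | hs
      · exact Or.inl hy
      · rw [mem_singleton_iff] at hs; subst hs; exact Or.inr hy

lemma case_one {K : SimplicialComplex ℝ (Pt n)} (hfin : K.faces.Finite)
    (hdim : TwoDimensional K) {e : Finset (Pt n)} {p q : Pt n}
    (he : e ∈ K.faces) (hpq : p ≠ q) (hepq : (e : Set (Pt n)) = {p, q})
    (h : (trianglesContaining K e).ncard = 1) : HasHalfPlanarNbhd K (midpoint ℝ p q) := by
  obtain ⟨t₁, hset⟩ := Set.ncard_eq_one.1 h
  have h1 : t₁ ∈ trianglesContaining K e := by rw [hset]; simp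
  obtain ⟨r₁, hr₁, -, hi₁⟩ := triangle_shape hpq hepq h1
  have hO : IsOpen {v : ℝ × ℝ | 2 * |v.1| + |v.2| < 1} :=
    isOpen_lt (by fun_prop) (by fun_prop)
  have hHc : IsClosed HalfPlane := isClosed_le (by fun_prop) (by fun_prop)
  obtain ⟨⟨φ⟩, hn⟩ := embed_lemma (rhomb_compact.inter_right hHc) hO (page_continuous p q r₁)
    (fun v _ w _ hvw => page_inj hi₁ hvw)
  have him : page p q r₁ '' (rhomb ∩ HalfPlane) = convexHull ℝ (t₁ : Set (Pt n)) := by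
    rw [hr₁]
    ext y; constructor
    · rintro ⟨⟨s, t⟩, ⟨hv, ht⟩, rfl⟩
      replace hv : 2 * |s| + |t| ≤ 1 := hv
      replace ht : 0 ≤ t := ht
      rw [abs_of_nonneg ht] at hv
      exact page_mem ht hv
    · intro hy
      obtain ⟨s, t, ht, hst, rfl⟩ := page_surj hy
      refine ⟨(s, t), ⟨?_, ht⟩, rfl⟩
      change 2 * |s| + |t| ≤ 1
      rwa [abs_of_nonneg ht]
  have hn0 := hn (0, 0) (by refine ⟨⟨?_, ?_⟩, ?_⟩ <;> simp [rhomb, HalfPlane])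
  rw [page_zero, him] at hn0
  have hV : (Subtype.val '' ((Subtype.val : HalfPlane → ℝ × ℝ) ⁻¹'
      {v : ℝ × ℝ | 2 * |v.1| + |v.2| < 1})) =
      rhomb ∩ HalfPlane ∩ {v : ℝ × ℝ | 2 * |v.1| + |v.2| < 1} := by
    rw [Subtype.image_preimage_coe]
    ext v
    constructor
    · rintro ⟨a, b⟩; exact ⟨⟨(le_of_lt b : 2 * |v.1| + |v.2| ≤ 1), a⟩, b⟩
    · rintro ⟨⟨-, a⟩, b⟩; exact ⟨a, b⟩
  refine ⟨_, ?_, nhds_lift hn0 ?_, _, hO.preimage continuous_subtype_val,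
    ⟨φ.trans ((Topology.IsEmbedding.subtypeVal.homeomorphImage _).trans
      (Homeomorph.setCongr hV)).symm⟩⟩
  · refine (image_mono inter_subset_left).trans ?_
    rw [him]
    exact SimplicialComplex.convexHull_subset_space h1.1
  · filter_upwards [local_structure' hfin hdim he hpq hepq] with y hy hyK
    rcases hy hyK with hy | ⟨s, hs, hy⟩
    · exact convexHull_mono (Finset.coe_subset.2 h1.2.2) hy
    · rw [hset, mem_singleton_iff] at hs
      subst hs; exact hy

/-! ### The negative direction -/

lemma planar_data {K : SimplicialComplex ℝ (Pt n)} {x : Pt n} (h : IsLocallyPlanarPt K x) :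
    ∃ U : Set (Pt n), U ⊆ K.space ∧ U ∈ nhdsWithin x K.space ∧ x ∈ U ∧
      ∃ S : Set (ℝ × ℝ), S ⊆ closure (interior S) ∧ Nonempty (↥U ≃ₜ ↥S) := by
  obtain ⟨hx, ⟨U, hUK, hU, V, hV, φ⟩ | ⟨U, hUK, hU, V, hV, ⟨φ⟩⟩⟩ := h
  · refine ⟨U, hUK, hU, mem_of_mem_nhdsWithin hx hU, V, ?_, φ⟩
    rw [hV.interior_eq]; exact subset_closure
  · refine ⟨U, hUK, hU, mem_of_mem_nhdsWithin hx hU, Subtype.val '' V, ?_,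
      ⟨φ.trans (Topology.IsEmbedding.subtypeVal.homeomorphImage V)⟩⟩
    obtain ⟨O, hO, rfl⟩ := isOpen_induced_iff.1 hV
    rw [Subtype.image_preimage_coe]
    rintro ⟨a, b⟩ ⟨hb, hab⟩
    replace hb : 0 ≤ b := hb
    rw [_root_.mem_closure_iff]
    intro W hW hWab
    have hop : IsOpen (O ∩ {v : ℝ × ℝ | 0 < v.2}) :=
      hO.inter (isOpen_lt (by fun_prop) (by fun_prop))
    have hsub : O ∩ {v : ℝ × ℝ | 0 < v.2} ⊆ interior (HalfPlane ∩ O) :=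
      interior_maximal (fun v hv => ⟨(le_of_lt hv.2 : (0:ℝ) ≤ v.2), hv.1⟩) hop
    have hcont : Continuous (fun δ : ℝ => ((a, b + δ) : ℝ × ℝ)) := by fun_prop
    have hev : ∀ᶠ δ in nhds (0:ℝ), ((a, b + δ) : ℝ × ℝ) ∈ O ∩ W :=
      hcont.continuousAt.eventually_mem
        ((hO.inter hW).mem_nhds (by simpa using ⟨hab, hWab⟩))
    obtain ⟨δ, hδ, hδ0⟩ := ((hev.filter_mono nhdsWithin_le_nhds).and
      (self_mem_nhdsWithin : Ioi (0:ℝ) ∈ nhdsWithin 0 (Ioi 0))).exists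
    refine ⟨_, hδ.2, hsub ⟨hδ.1, ?_⟩⟩
    change 0 < b + δ
    have : 0 < δ := hδ0
    linarith

lemma case_three {K : SimplicialComplex ℝ (Pt n)} {e : Finset (Pt n)} {p q : Pt n}
    (hfin : K.faces.Finite) (hpq : p ≠ q) (hepq : (e : Set (Pt n)) = {p, q})
    (h : 2 < (trianglesContaining K e).ncard) : ¬ IsLocallyPlanarPt K (midpoint ℝ p q) := by
  intro hlp
  obtain ⟨U, hUK, hU, hxU, S, -, ⟨φ⟩⟩ := planar_data hlp
  obtain ⟨t₁, t₂, t₃, h1, h2, h3, h12, h13, h23⟩ :=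
    (Set.two_lt_ncard_iff (hfin.subset fun t ht => ht.1)).1 h
  obtain ⟨r₁, hr₁, -, hi₁⟩ := triangle_shape hpq hepq h1
  obtain ⟨r₂, hr₂, -, hi₂⟩ := triangle_shape hpq hepq h2
  obtain ⟨r₃, hr₃, -, hi₃⟩ := triangle_shape hpq hepq h3
  classical
  set Φ : Pt n → ℂ := fun y => if hy : y ∈ U then
    Complex.equivRealProdCLM.symm (φ ⟨y, hy⟩ : ℝ × ℝ) else 0 with hΦ
  have hΦc : ContinuousOn Φ U := by
    rw [continuousOn_iff_continuous_domRestrict]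
    have : U.domRestrict Φ = fun y => Complex.equivRealProdCLM.symm (φ y : ℝ × ℝ) := by
      ext1 y; simp [hΦ]
    rw [this]
    exact Complex.equivRealProdCLM.symm.continuous.comp (continuous_subtype_val.comp φ.continuous)
  have hΦi : InjOn Φ U := by
    intro y hy z hz hyz
    simp only [hΦ, hy, hz, dif_pos] at hyz
    have := φ.injective (Subtype.ext (Complex.equivRealProdCLM.symm.injective hyz))
    exact congrArg Subtype.val this
  -- neighbourhood
  obtain ⟨N, hN, hxN, hNU⟩ := mem_nhdsWithin.1 hU
  have hbK : ∀ v ∈ rhomb, book p q r₁ r₂ v ∈ K.space := by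
    intro v hv
    have := mem_image_of_mem (book p q r₁ r₂) hv
    rw [book_image, ← hr₁, ← hr₂] at this
    rcases this with h | h
    · exact SimplicialComplex.convexHull_subset_space h1.1 h
    · exact SimplicialComplex.convexHull_subset_space h2.1 h
  have hb0 : book p q r₁ r₂ (0, 0) = midpoint ℝ p q := by rw [book_nonneg le_rfl, page_zero]
  have hev : ∀ᶠ v in nhds ((0, 0) : ℝ × ℝ), book p q r₁ r₂ v ∈ N :=
    (book_continuous p q r₁ r₂).continuousAt.eventually_mem (hN.mem_nhds (by rw [hb0]; exact hxN))
  obtain ⟨δ, hδ, hball⟩ := Metric.eventually_nhds_iff.1 hev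
  set ε := min (δ / 2) (1 / 3) with hε
  have hε0 : 0 < ε := by positivity
  have hεδ : ε < δ := lt_of_le_of_lt (min_le_left _ _) (by linarith)
  have hε3 : ε ≤ 1 / 3 := min_le_right _ _
  set g : ℂ → ℝ × ℝ := fun z => (ε * z.re, ε * z.im) with hg
  have hgc : Continuous g := by
    have h1 := Complex.continuous_re
    have h2 := Complex.continuous_im
    fun_prop
  have hgb : ∀ z ∈ closedBall (0:ℂ) 1, |ε * z.re| ≤ ε ∧ |ε * z.im| ≤ ε := by
    intro z hz
    rw [mem_closedBall_zero_iff] at hz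
    rw [abs_mul, abs_mul, abs_of_pos hε0]
    constructor
    · nlinarith [Complex.abs_re_le_norm z]
    · nlinarith [Complex.abs_im_le_norm z]
  have hgr : ∀ z ∈ closedBall (0:ℂ) 1, g z ∈ rhomb := by
    intro z hz
    obtain ⟨a, b⟩ := hgb z hz
    change 2 * |ε * z.re| + |ε * z.im| ≤ 1
    linarith
  have hgU : ∀ z ∈ closedBall (0:ℂ) 1, book p q r₁ r₂ (g z) ∈ U := by
    intro z hz
    refine hNU ⟨hball ?_, hbK _ (hgr z hz)⟩
    obtain ⟨a, b⟩ := hgb z hz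
    rw [Prod.dist_eq]
    simp only [hg, Real.dist_eq, sub_zero]
    exact max_lt (by linarith) (by linarith)
  have hginj : Function.Injective g := by
    intro z w hzw
    simp only [hg, Prod.mk.injEq, mul_eq_mul_left_iff, hε0.ne', or_false] at hzw
    exact Complex.ext hzw.1 hzw.2
  have inv := invariance_domain (fun z => Φ (book p q r₁ r₂ (g z)))
    (hΦc.comp ((book_continuous p q r₁ r₂).comp hgc).continuousOn hgU)
    (fun z hz w hw hzw => hginj (book_injOn hepq h1 h2 h12 hr₁ hi₁ hr₂ hi₂ (hgr z hz) (hgr w hw)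
      (hΦi (hgU z hz) (hgU w hw) hzw)))
  have hg0 : g 0 = (0, 0) := by simp [hg]
  simp only [hg0, hb0] at inv
  -- third page
  have hpre : ∀ᶠ y in nhdsWithin (midpoint ℝ p q) K.space,
      y ∈ U ∧ Φ y ∈ (fun z => Φ (book p q r₁ r₂ (g z))) '' closedBall 0 1 := by
    have : ∀ᶠ y in nhdsWithin (midpoint ℝ p q) U,
        Φ y ∈ (fun z => Φ (book p q r₁ r₂ (g z))) '' closedBall 0 1 :=
      (hΦc _ hxU).eventually_mem inv
    have h2 : nhdsWithin (midpoint ℝ p q) K.space ≤ nhdsWithin (midpoint ℝ p q) U :=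
      nhdsWithin_le_iff.2 hU
    exact (Filter.eventually_of_mem hU fun _ h => h).and (h2 this)
  have htend : Filter.Tendsto (fun t : ℝ => page p q r₃ (0, t)) (nhdsWithin 0 (Ioi 0))
      (nhdsWithin (midpoint ℝ p q) K.space) := by
    refine tendsto_nhdsWithin_of_tendsto_nhds_of_eventually_within _ ?_ ?_
    · have : Continuous (fun t : ℝ => page p q r₃ (0, t)) :=
        (page_continuous p q r₃).comp (by fun_prop)
      have := this.tendsto 0
      rw [page_zero] at this
      exact this.mono_left nhdsWithin_le_nhds
    · filter_upwards [Ioo_mem_nhdsGT (show (0:ℝ) < 1 by norm_num)] with t ht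
      refine SimplicialComplex.convexHull_subset_space h3.1 ?_
      rw [hr₃]
      exact page_mem ht.1.le (by simpa using ht.2.le)
  obtain ⟨t, ⟨htU, z, hz, hzt⟩, ht⟩ := ((htend.eventually hpre).and
    (Ioo_mem_nhdsGT (show (0:ℝ) < 1 by norm_num))).exists
  have heq := hΦi (hgU z hz) htU hzt
  have hmem := mem_image_of_mem (book p q r₁ r₂) (hgr z hz)
  rw [heq, book_image, ← hr₁, ← hr₂] at hmem
  have ht' : 2 * |(0:ℝ)| + t ≤ 1 := by simpa using ht.2.le
  rcases hmem with hm | hm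
  · exact ht.1.ne' (page_cross hepq h3 h1 h13.symm hr₃ hi₃ ht.1.le ht' hm)
  · exact ht.1.ne' (page_cross hepq h3 h2 h23.symm hr₃ hi₃ ht.1.le ht' hm)

lemma case_zero {K : SimplicialComplex ℝ (Pt n)} (hfin : K.faces.Finite)
    (hdim : TwoDimensional K) {e : Finset (Pt n)} {p q : Pt n}
    (he : e ∈ K.faces) (hpq : p ≠ q) (hepq : (e : Set (Pt n)) = {p, q})
    (h : (trianglesContaining K e).ncard = 0) : ¬ IsLocallyPlanarPt K (midpoint ℝ p q) := by
  intro hlp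
  obtain ⟨U, hUK, hU, hxU, S, hS, ⟨φ⟩⟩ := planar_data hlp
  have hemp : trianglesContaining K e = ∅ :=
    (Set.ncard_eq_zero (hfin.subset fun t ht => ht.1)).1 h
  obtain ⟨N, hNsub, hN, hxN⟩ := _root_.eventually_nhds_iff.1 (local_structure' hfin hdim he hpq hepq)
  have hNseg : ∀ y ∈ N, y ∈ K.space → y ∈ convexHull ℝ ({p, q} : Set (Pt n)) := by
    intro y hy hyK
    rcases hNsub y hy hyK with h | ⟨s, hs, -⟩
    · rwa [hepq] at h
    · rw [hemp] at hs; exact absurd hs (notMem_empty _)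
  have hopen : IsOpen ((fun v : S => (φ.symm v : Pt n)) ⁻¹' N) :=
    hN.preimage (continuous_subtype_val.comp φ.symm.continuous)
  obtain ⟨O, hO, hOe⟩ := isOpen_induced_iff.1 hopen
  have hφO : (φ ⟨_, hxU⟩ : ℝ × ℝ) ∈ O := by
    have : φ ⟨_, hxU⟩ ∈ Subtype.val ⁻¹' O := by rw [hOe]; simpa using hxN
    exact this
  obtain ⟨w, hwO, hwS⟩ := _root_.mem_closure_iff.1 (hS (φ ⟨_, hxU⟩).2) O hO hφO
  have hop : IsOpen (Complex.equivRealProdCLM ⁻¹' (O ∩ interior S)) :=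
    (hO.inter isOpen_interior).preimage Complex.equivRealProdCLM.continuous
  obtain ⟨ρ, hρ, hball⟩ := Metric.nhds_basis_closedBall.mem_iff.1
    (hop.mem_nhds (x := Complex.equivRealProdCLM.symm w) (by
      rw [mem_preimage, ContinuousLinearEquiv.apply_symm_apply]; exact ⟨hwO, hwS⟩))
  set g : ℂ → ℝ × ℝ := fun z => Complex.equivRealProdCLM
    (Complex.equivRealProdCLM.symm w + (ρ : ℂ) * z) with hg
  have hgc : Continuous g := Complex.equivRealProdCLM.continuous.comp (by fun_prop)
  have hgi : Function.Injective g := by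
    intro a b hab
    have := Complex.equivRealProdCLM.injective hab
    have h2 := add_left_cancel this
    exact mul_left_cancel₀ (by exact_mod_cast hρ.ne') h2
  have hgm : ∀ z ∈ closedBall (0:ℂ) 1, g z ∈ O ∩ interior S := by
    intro z hz
    refine hball ?_
    rw [mem_closedBall_zero_iff] at hz
    rw [mem_closedBall, dist_eq_norm, add_sub_cancel_left, norm_mul, Complex.norm_real,
      Real.norm_eq_abs, abs_of_pos hρ]
    nlinarith
  classical
  set ψ : ℝ × ℝ → Pt n := fun v => if hv : v ∈ S then (φ.symm ⟨v, hv⟩ : Pt n) else 0 with hψ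
  have hψc : ContinuousOn ψ S := by
    rw [continuousOn_iff_continuous_domRestrict]
    have : S.domRestrict ψ = fun y => (φ.symm y : Pt n) := by
      ext1 y; simp [hψ]
    rw [this]
    exact continuous_subtype_val.comp φ.symm.continuous
  have hψi : InjOn ψ S := by
    intro y hy z hz hyz
    simp only [hψ, hy, hz, dif_pos] at hyz
    have := φ.symm.injective (Subtype.ext hyz)
    exact congrArg Subtype.val this
  have hψm : ∀ v ∈ O ∩ S, ψ v ∈ convexHull ℝ ({p, q} : Set (Pt n)) := by
    rintro v ⟨hvO, hvS⟩
    have h1 : (⟨v, hvS⟩ : S) ∈ (fun v : S => (φ.symm v : Pt n)) ⁻¹' N := by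
      rw [← hOe]; exact hvO
    simp only [hψ, hvS, dif_pos]
    exact hNseg _ h1 (hUK (φ.symm ⟨v, hvS⟩).2)
  set F : Pt n → ℝ := fun y => inner ℝ (q - p) (y - p) with hF
  have hFc : Continuous F := by fun_prop
  have hFi : InjOn F (convexHull ℝ ({p, q} : Set (Pt n))) := by
    intro y hy z hz hyz
    rw [convexHull_pair, segment_eq_image'] at hy hz
    obtain ⟨a, -, rfl⟩ := hy
    obtain ⟨b, -, rfl⟩ := hz
    have hne : ‖q - p‖ ≠ 0 := by simpa [sub_eq_zero] using hpq.symm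
    simp only [hF, add_sub_cancel_left, inner_smul_right, real_inner_self_eq_norm_sq] at hyz
    have := mul_right_cancel₀ (pow_ne_zero 2 hne) hyz
    simp only [this]
  have hgS : ∀ z ∈ closedBall (0:ℂ) 1, g z ∈ S := fun z hz => interior_subset (hgm z hz).2
  have inv := invariance_domain (fun z => ((F (ψ (g z)) : ℝ) : ℂ))
    (Complex.continuous_ofReal.comp_continuousOn
      (hFc.comp_continuousOn (hψc.comp hgc.continuousOn hgS)))
    (fun z hz y hy hzy => hgi (hψi (hgS z hz) (hgS y hy)
      (hFi (hψm _ ⟨(hgm z hz).1, hgS z hz⟩) (hψm _ ⟨(hgm y hy).1, hgS y hy⟩)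
        (Complex.ofReal_injective hzy))))
  obtain ⟨ε, hε, hb⟩ := Metric.nhds_basis_closedBall.mem_iff.1 inv
  have : ((F (ψ (g 0)) : ℝ) : ℂ) + (ε : ℂ) * Complex.I ∈
      closedBall ((F (ψ (g 0)) : ℝ) : ℂ) ε := by
    rw [mem_closedBall, dist_eq_norm, add_sub_cancel_left, norm_mul, Complex.norm_real,
      Complex.norm_I, Real.norm_eq_abs, abs_of_pos hε, mul_one]
  obtain ⟨z, -, hz⟩ := hb this
  have := congrArg Complex.im hz
  simp at this
  linarith

end Helpers

/-- the midpoint of an edge is a locally planar point of `|K|` iff the edge is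
contained in exactly one or exactly two triangles. -/
theorem midpoint_locallyPlanar_iff (K : SimplicialComplex ℝ (Pt n))
    (hfin : K.faces.Finite) (hdim : TwoDimensional K)
    (e : Finset (Pt n)) (he : e ∈ K.faces) (p q : Pt n) (hpq : p ≠ q)
    (hepq : (e : Set (Pt n)) = {p, q}) :
    IsLocallyPlanarPt K (midpoint ℝ p q) ↔
      (trianglesContaining K e).ncard = 1 ∨ (trianglesContaining K e).ncard = 2 := by
  constructor
  · intro h
    by_contra hcon
    push Not at hcon
    rcases Nat.lt_or_ge 2 (trianglesContaining K e).ncard with h3 | h3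
    · exact case_three hfin hpq hepq h3 h
    · exact case_zero hfin hdim he hpq hepq (by omega) h
  · intro h
    have hx : midpoint ℝ p q ∈ K.space := by
      refine SimplicialComplex.convexHull_subset_space he ?_
      rw [hepq, convexHull_pair]
      exact midpoint_mem_segment p q
    rcases h with h | h
    · exact ⟨hx, Or.inr (case_one hfin hdim he hpq hepq h)⟩
    · exact ⟨hx, Or.inl (case_two hfin hdim he hpq hepq h)⟩

end PaperAlg
end

section
/- Let K be a finite 2-dimensional geometric simplicial complex in ℝⁿ, let e = {p, q} be an edge of K, and let x = (p + q)/2 be its midpoint. If e is an interior edge, then x has a neighborhood in |K| homeomorphic to an open subset of ℝ². If e is a boundary edge, then x has a neighborhood in |K| homeomorphic to an open subset of the closed half-plane {(a,b) ∈ ℝ² : b ≥ 0} but has no neighborhood in |K| homeomorphic to an open subset of ℝ². -/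
open Geometry

namespace PaperAlg

variable {n : ℕ}

section helpers
open Set Topology Filter

def HD (δ : ℝ) : Set (ℝ × ℝ) := {c | 0 ≤ c.2 ∧ ‖c‖ < δ}

lemma HD_convex (δ : ℝ) : Convex ℝ (HD δ) := by
  have h1 : Convex ℝ {c : ℝ × ℝ | 0 ≤ c.2} :=
    convex_halfSpace_ge (f := fun c : ℝ × ℝ => c.2) ⟨fun _ _ => rfl, fun _ _ => rfl⟩ 0
  have h2 := convex_ball (0 : ℝ × ℝ) δ
  have : HD δ = {c : ℝ × ℝ | 0 ≤ c.2} ∩ Metric.ball 0 δ := by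
    ext c; simp [HD]
  rw [this]; exact h1.inter h2

lemma HD_star {δ : ℝ} (hδ : 0 < δ) : StarConvex ℝ ((0, δ / 2) : ℝ × ℝ) (HD δ \ {0}) := by
  have hm : ((0, δ / 2) : ℝ × ℝ) ∈ HD δ := by
    refine ⟨by simp; linarith, ?_⟩
    simp [Prod.norm_def, abs_of_pos hδ]
    exact hδ
  intro c hc a b ha hb hab
  refine ⟨HD_convex δ hm hc.1 ha hb hab, ?_⟩
  intro h
  apply hc.2
  simp only [mem_singleton_iff] at h ⊢
  have h1 := congrArg Prod.fst h
  have h2 := congrArg Prod.snd h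
  simp at h1 h2
  have hc2 := hc.1.1
  have ha0 : a * (δ / 2) = 0 := by nlinarith [mul_nonneg ha (half_pos hδ).le, mul_nonneg hb hc2]
  have ha0 : a = 0 := by
    rcases mul_eq_zero.1 ha0 with h | h
    · exact h
    · linarith
  have hb1 : b = 1 := by linarith
  subst hb1; subst ha0
  simp at h1 h2
  exact Prod.ext h1 h2

lemma no_emb {δ : ℝ} (hδ : 0 < δ) (G : HD δ → ℂ) (hG : IsEmbedding G) (z0 : HD δ)
    (hz0 : (z0 : ℝ × ℝ) = 0) (hr : range G ∈ 𝓝 (G z0)) : False := by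
  have hsub : HD δ \ {0} ⊆ HD δ := sdiff_subset
  have hm : ((0, δ / 2) : ℝ × ℝ) ∈ HD δ \ {0} := by
    refine ⟨⟨by simp; linarith, ?_⟩, ?_⟩
    · simp [Prod.norm_def, abs_of_pos hδ]
      exact hδ
    · simp [Prod.ext_iff]; exact hδ.ne'
  have : ContractibleSpace ↥(HD δ \ {0}) := (HD_star hδ).contractibleSpace ⟨_, hm⟩
  have : LocallyPathConnectedSpace ↥(HD δ) := (HD_convex δ).locallyPathConnectedSpace
  have : LocallyPathConnectedSpace ↥(HD δ \ {0}) := by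
    refine IsOpenEmbedding.locallyPathConnectedSpace (e := inclusion hsub)
      ⟨IsEmbedding.inclusion hsub, ?_⟩
    rw [range_inclusion]
    have : {x : ↥(HD δ) | (x : ℝ × ℝ) ∈ HD δ \ {0}} = {z0}ᶜ := by
      ext x
      simp [Subtype.ext_iff, hz0]
    rw [this]
    exact isOpen_compl_singleton
  let f : C(↥(HD δ \ {0}), ℂ) := ⟨fun c => G (inclusion hsub c) - G z0,
    (hG.continuous.comp (continuous_inclusion hsub)).sub continuous_const⟩
  have hf : ∀ c, f c ∈ ({0}ᶜ : Set ℂ) := by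
    intro c hc
    have h : G (inclusion hsub c) = G z0 := sub_eq_zero.1 hc
    have h := congrArg Subtype.val (hG.injective h)
    rw [hz0] at h
    exact c.2.2 h
  obtain ⟨k, ⟨-, hk⟩, -⟩ := Complex.isCoveringMapOn_exp.existsUnique_continuousMap_lifts f
    (a₀ := ⟨_, hm⟩) (e₀ := Complex.log (f ⟨_, hm⟩)) (Complex.exp_log (hf _)) hf
  obtain ⟨r, hr0, hrb⟩ := Metric.nhds_basis_closedBall.mem_iff.1 hr
  have hmem : ∀ t : ℝ, G z0 + r * Complex.exp (t * Complex.I) ∈ range G := by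
    intro t
    apply hrb
    simp [abs_of_pos hr0]
  let ψ : ℝ → HD δ := fun t => hG.toHomeomorph.symm ⟨_, hmem t⟩
  have hψc : Continuous ψ := by
    refine hG.toHomeomorph.symm.continuous.comp ?_
    fun_prop
  have hψ : ∀ t, G (ψ t) = G z0 + r * Complex.exp (t * Complex.I) := by
    intro t
    have := hG.toHomeomorph.apply_symm_apply ⟨_, hmem t⟩
    exact congrArg Subtype.val this
  have hψ0 : ∀ t, (ψ t : ℝ × ℝ) ∈ HD δ \ {0} := by
    intro t
    refine ⟨(ψ t).2, ?_⟩
    intro h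
    have h1 : ψ t = z0 := Subtype.ext (by rw [hz0]; exact h)
    have h2 := hψ t
    rw [h1] at h2
    have : (r : ℂ) * Complex.exp (t * Complex.I) = 0 := by
      linear_combination -h2
    simp [hr0.ne'] at this
  have hper : ψ (2 * Real.pi) = ψ 0 := by
    apply hG.injective
    rw [hψ, hψ]
    simp
  let m : ℝ → ℂ := fun t => k ⟨ψ t, hψ0 t⟩ - t * Complex.I
  have hmc : Continuous m := by
    refine Continuous.sub (k.continuous.comp ?_) (by fun_prop)
    exact (continuous_subtype_val.comp hψc).subtype_mk _
  have hexp : ∀ t, Complex.exp (m t) = r := by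
    intro t
    have h1 : Complex.exp (k ⟨ψ t, hψ0 t⟩) = G (ψ t) - G z0 := congrFun hk ⟨ψ t, hψ0 t⟩
    simp only [m]
    rw [Complex.exp_sub, h1, hψ]
    field_simp
    ring
  have hconst := Complex.isCoveringMap_exp.eq_of_comp_eq (g₁ := m) (g₂ := fun _ => m 0) hmc
    continuous_const (by
      funext t
      apply Subtype.ext
      simp [hexp]) 0 rfl
  have h := congrFun hconst (2 * Real.pi)
  have h' : k ⟨ψ (2 * Real.pi), hψ0 _⟩ = k ⟨ψ 0, hψ0 _⟩ := by
    have : (⟨ψ (2 * Real.pi), hψ0 _⟩ : ↥(HD δ \ {0})) = ⟨ψ 0, hψ0 _⟩ :=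
      Subtype.ext (congrArg (fun c : ↥(HD δ) => (c : ℝ × ℝ)) hper)
    rw [this]
  simp [m, h'] at h

section emb
variable {X Y : Type*} [TopologicalSpace X] [TopologicalSpace Y] [T2Space X]

lemma emb_of_compact {C : Set Y} (hC : IsCompact C) {F : Y → X} (hF : ContinuousOn F C)
    (hi : InjOn F C) {A : Set Y} (hA : A ⊆ C) : IsEmbedding (fun c : A => F c) := by
  have := isCompact_iff_compactSpace.1 hC
  have h : IsClosedEmbedding (fun c : C => F c) :=
    Continuous.isClosedEmbedding (continuousOn_iff_continuous_domRestrict.1 hF)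
      (fun a b hab => Subtype.ext (hi a.2 b.2 hab))
  exact h.isEmbedding.comp (IsEmbedding.inclusion hA)

lemma homeo_of_compact {C : Set Y} (hC : IsCompact C) {F : Y → X} (hF : ContinuousOn F C)
    (hi : InjOn F C) {A : Set Y} (hA : A ⊆ C) : Nonempty (↥(F '' A) ≃ₜ ↥A) := by
  have h := emb_of_compact hC hF hi hA
  have hr : range (fun c : A => F c) = F '' A := by
    ext x; simp
  exact ⟨((h.toHomeomorph).trans (Homeomorph.setCongr hr)).symm⟩

lemma nhds_of_compact {C : Set Y} (hC : IsCompact C) {F : Y → X} (hF : ContinuousOn F C)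
    (hi : InjOn F C) {W : Set Y} (hW : IsOpen W) {c : Y} (hc : c ∈ W) (hcC : c ∈ C) :
    F '' (W ∩ C) ∈ 𝓝[F '' C] (F c) := by
  have h1 : IsCompact (F '' (C \ W)) :=
    (hC.diff hW).image_of_continuousOn (hF.mono sdiff_subset)
  have h2 : F c ∉ F '' (C \ W) := by
    rintro ⟨d, hd, hdc⟩
    exact hd.2 (hi hd.1 hcC hdc ▸ hc)
  have h3 := h1.isClosed.isOpen_compl.mem_nhds h2
  filter_upwards [mem_nhdsWithin_of_mem_nhds h3, self_mem_nhdsWithin]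
  rintro _ h ⟨d, hd, rfl⟩
  by_cases hdW : d ∈ W
  · exact ⟨d, ⟨hdW, hd⟩, rfl⟩
  · exact absurd ⟨d, ⟨hd, hdW⟩, rfl⟩ h

lemma no_planar {C : Set (ℝ × ℝ)} (hC : IsCompact C) {F : ℝ × ℝ → X} (hF : ContinuousOn F C)
    (hi : InjOn F C) {S : Set X} (hS : F '' C ⊆ S) (hS' : F '' C ∈ 𝓝[S] (F 0))
    {δ₀ : ℝ} (hδ₀ : 0 < δ₀) (hCp : ∀ c ∈ C, 0 ≤ c.2) (hHD : HD δ₀ ⊆ C)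
    {U : Set X} (hUS : U ⊆ S) (hU : U ∈ 𝓝[S] (F 0)) {V : Set (ℝ × ℝ)} (hV : IsOpen V)
    (φ : U ≃ₜ V) : False := by
  have h0 : (0 : ℝ × ℝ) ∈ C := hHD ⟨le_rfl, by simpa using hδ₀⟩
  have h0S : F 0 ∈ S := hS ⟨0, h0, rfl⟩
  have h0U : F 0 ∈ U := mem_of_mem_nhdsWithin h0S hU
  have ht : Tendsto F (𝓝[C] 0) (𝓝[S] (F 0)) :=
    tendsto_nhdsWithin_iff.2 ⟨hF 0 h0, by
      filter_upwards [self_mem_nhdsWithin] with c hc using hS ⟨c, hc, rfl⟩⟩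
  obtain ⟨δ₁, hδ₁, hb⟩ := Metric.mem_nhdsWithin_iff.1 (ht hU)
  set δ := min δ₀ δ₁ with hδdef
  have hδ : 0 < δ := lt_min hδ₀ hδ₁
  have hsub : HD δ ⊆ C := fun c hc => hHD ⟨hc.1, hc.2.trans_le (min_le_left _ _)⟩
  have hHeq : HD δ = Metric.ball 0 δ ∩ C := by
    ext c
    constructor
    · intro hc; exact ⟨by simpa using hc.2, hsub hc⟩
    · rintro ⟨h1, h2⟩; exact ⟨hCp c h2, by simpa using h1⟩
  have hFU : ∀ c ∈ HD δ, F c ∈ U := by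
    intro c hc
    exact hb ⟨by simpa using hc.2.trans_le (min_le_right _ _), hsub hc⟩
  let G₀ : HD δ → U := fun c => ⟨F c, hFU c c.2⟩
  have hG₀ : IsEmbedding G₀ := by
    have := emb_of_compact hC hF hi hsub
    exact IsEmbedding.of_comp (this.continuous.subtype_mk _) continuous_subtype_val this
  let ρ : U → ℂ := fun u => Complex.equivRealProdCLM.symm (φ u : ℝ × ℝ)
  have hρ : IsOpenEmbedding ρ :=
    (Complex.equivRealProdCLM.symm.toHomeomorph.isOpenEmbedding.comp
      hV.isOpenEmbedding_subtypeVal).comp φ.isOpenEmbedding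
  have hz : (0 : ℝ × ℝ) ∈ HD δ := ⟨le_rfl, by simpa using hδ⟩
  refine no_emb hδ (ρ ∘ G₀) (hρ.isEmbedding.comp hG₀) ⟨0, hz⟩ rfl ?_
  rw [range_comp]
  refine hρ.isOpenMap.image_mem_nhds ?_
  have h1 : F '' (HD δ) ∈ 𝓝[F '' C] (F 0) := by
    rw [hHeq]
    exact nhds_of_compact hC hF hi Metric.isOpen_ball (by simpa using hδ) h0
  have h2 : F '' (HD δ) ∈ 𝓝[U] (F 0) := by
    have : 𝓝[U] (F 0) ≤ 𝓝[F '' C] (F 0) :=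
      (nhdsWithin_mono _ hUS).trans (nhdsWithin_le_iff.2 hS')
    exact this h1
  have h3 := (mem_nhds_subtype_iff_nhdsWithin (a := (⟨F 0, h0U⟩ : U)) (t := Subtype.val ⁻¹' (F '' (HD δ)))).2 (by
    filter_upwards [h2, self_mem_nhdsWithin] with y hy hyU
    exact ⟨⟨y, hyU⟩, hy, rfl⟩)
  refine mem_of_superset h3 ?_
  rintro y ⟨c, hc, hcy⟩
  exact ⟨⟨c, hc⟩, Subtype.ext hcy⟩

end emb

section tri
variable {E : Type*} [NormedAddCommGroup E] [NormedSpace ℝ E]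

noncomputable def Fm (p q r : E) (c : ℝ × ℝ) : E :=
  ((1 - c.2) / 2 - c.1) • p + ((1 - c.2) / 2 + c.1) • q + c.2 • r

noncomputable def Fi (p q r r' : E) (c : ℝ × ℝ) : E :=
  ((1 - |c.2|) / 2 - c.1) • p + ((1 - |c.2|) / 2 + c.1) • q + (max c.2 0) • r + (max (-c.2) 0) • r'

def Ci : Set (ℝ × ℝ) := {c | |c.1| ≤ (1 - |c.2|) / 2}

def Wi : Set (ℝ × ℝ) := {c | |c.1| < (1 - |c.2|) / 2}

def Cp : Set (ℝ × ℝ) := Ci ∩ {c | 0 ≤ c.2}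

lemma Ci_compact : IsCompact Ci := by
  refine Metric.isCompact_of_isClosed_isBounded ?_ ?_
  · exact isClosed_le (by fun_prop) (by fun_prop)
  · refine (Metric.isBounded_closedBall (x := (0 : ℝ × ℝ)) (r := 1)).subset ?_
    intro c hc
    have h : |c.1| ≤ (1 - |c.2|) / 2 := hc
    have h1 := abs_nonneg c.1
    have h2 := abs_nonneg c.2
    simp only [mem_closedBall_zero_iff, Prod.norm_def, Real.norm_eq_abs]
    exact max_le (by linarith) (by linarith)

lemma Cp_compact : IsCompact Cp :=
  Ci_compact.inter_right (isClosed_le continuous_const continuous_snd)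

lemma Wi_open : IsOpen Wi := isOpen_lt (by fun_prop) (by fun_prop)

lemma Wi_sub : Wi ⊆ Ci := by
  intro c hc
  simp only [Wi, Ci, mem_setOf_eq] at *
  exact hc.le

lemma zero_mem_Wi : (0 : ℝ × ℝ) ∈ Wi := by simp [Wi]

lemma Fi_pos (p q r r' : E) {c : ℝ × ℝ} (hc : 0 ≤ c.2) : Fi p q r r' c = Fm p q r c := by
  simp [Fi, Fm, abs_of_nonneg hc, hc]

lemma Fi_neg (p q r r' : E) {c : ℝ × ℝ} (hc : c.2 ≤ 0) :
    Fi p q r r' c = Fm p q r' (c.1, -c.2) := by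
  simp [Fi, Fm, abs_of_nonpos hc, hc]

lemma Fm_cont (p q r : E) : Continuous (Fm p q r) := by unfold Fm; fun_prop

lemma Fi_cont (p q r r' : E) : Continuous (Fi p q r r') := by unfold Fi; fun_prop

lemma Fm_zero (p q r : E) : Fm p q r 0 = midpoint ℝ p q := by
  simp [Fm, midpoint_eq_smul_add]

lemma Fi_zero (p q r r' : E) : Fi p q r r' 0 = midpoint ℝ p q := by
  rw [Fi_pos _ _ _ _ le_rfl, Fm_zero]

lemma Fm_image (p q r : E) : Fm p q r '' Cp = convexHull ℝ {p, q, r} := by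
  ext x
  constructor
  · rintro ⟨c, ⟨hc : |c.1| ≤ (1 - |c.2|) / 2, hc2 : 0 ≤ c.2⟩, rfl⟩
    rw [abs_of_nonneg hc2, abs_le] at hc
    have hconv := convex_convexHull ℝ ({p, q, r} : Set E)
    have := hconv.sum_mem (t := (Finset.univ : Finset (Fin 3)))
      (w := ![(1 - c.2) / 2 - c.1, (1 - c.2) / 2 + c.1, c.2]) (z := ![p, q, r])
      (by intro i _; fin_cases i <;> simp <;> linarith)
      (by simp [Fin.sum_univ_three])
      (by intro i _; apply subset_convexHull; fin_cases i <;> simp)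
    simpa [Fin.sum_univ_three, Fm] using this
  · intro hx
    rw [show ({p, q, r} : Set E) = insert r {p, q} by
      ext; simp; tauto] at hx
    rw [convexHull_insert ⟨p, by simp⟩, convexHull_pair, mem_convexJoin] at hx
    obtain ⟨y, hy, z, hz, hx⟩ := hx
    simp at hy; subst hy
    obtain ⟨a, b, ha, hb, hab, rfl⟩ := hz
    obtain ⟨u, v, hu, hv, huv, rfl⟩ := hx
    refine ⟨(v * (b - a) / 2, u), ⟨?_, hu⟩, ?_⟩
    · show |v * (b - a) / 2| ≤ (1 - |u|) / 2
      rw [abs_of_nonneg hu, abs_le]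
      have : 1 - u = v := by linarith
      rw [this]
      have hb' : b = 1 - a := by linarith
      subst hb'
      constructor <;> nlinarith
    · have hu' : u = 1 - v := by linarith
      have hb' : b = 1 - a := by linarith
      subst hu' hb'
      simp only [Fm]
      module

lemma Fm_inj {p q r : E} (h : AffineIndependent ℝ ![p, q, r]) : Function.Injective (Fm p q r) := by
  intro c d hcd
  have := affineIndependent_iff.1 h Finset.univ
    ![((1 - c.2) / 2 - c.1) - ((1 - d.2) / 2 - d.1), ((1 - c.2) / 2 + c.1) - ((1 - d.2) / 2 + d.1),
      c.2 - d.2] (by simp [Fin.sum_univ_three]; ring) (by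
      simp only [Fm] at hcd
      simp only [Fin.sum_univ_three, Matrix.cons_val]
      rw [← sub_eq_zero] at hcd
      rw [← hcd]
      module)
  have h1 := this 1 (by simp)
  have h2 := this 2 (by simp)
  simp at h1 h2
  exact Prod.ext (by linarith) (by linarith)

lemma Fi_image (p q r r' : E) :
    Fi p q r r' '' Ci = convexHull ℝ {p, q, r} ∪ convexHull ℝ {p, q, r'} := by
  rw [← Fm_image, ← Fm_image]
  ext x
  constructor
  · rintro ⟨c, hc, rfl⟩
    rcases le_total 0 c.2 with h | h
    · left; rw [Fi_pos _ _ _ _ h]; exact ⟨c, ⟨hc, h⟩, rfl⟩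
    · right; rw [Fi_neg _ _ _ _ h]
      exact ⟨_, ⟨by simpa [Ci] using hc, by simpa using h⟩, rfl⟩
  · rintro (⟨c, ⟨hc, h⟩, rfl⟩ | ⟨c, ⟨hc, h⟩, rfl⟩)
    · exact ⟨c, hc, Fi_pos _ _ _ _ h⟩
    · refine ⟨(c.1, -c.2), by simpa [Ci] using hc, ?_⟩
      rw [Fi_neg _ _ _ _ (by simpa using h)]
      simp

lemma Fi_inj {p q r r' : E} (h : AffineIndependent ℝ ![p, q, r])
    (h' : AffineIndependent ℝ ![p, q, r'])
    (hint : convexHull ℝ {p, q, r} ∩ convexHull ℝ {p, q, r'} ⊆ convexHull ℝ {p, q}) :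
    InjOn (Fi p q r r') Ci := by
  have key : ∀ c ∈ Ci, ∀ d ∈ Ci, 0 ≤ c.2 → d.2 ≤ 0 → Fi p q r r' c = Fi p q r r' d → c = d := by
    intro c hc d hd h0c h0d hcd
    have hx1 : Fi p q r r' c ∈ convexHull ℝ {p, q, r} := by
      rw [← Fm_image, Fi_pos _ _ _ _ h0c]; exact ⟨c, ⟨hc, h0c⟩, rfl⟩
    have hx2 : Fi p q r r' c ∈ convexHull ℝ {p, q, r'} := by
      rw [hcd, ← Fm_image, Fi_neg _ _ _ _ h0d]
      exact ⟨_, ⟨by simpa [Ci] using hd, by simpa using h0d⟩, rfl⟩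
    have hx := hint ⟨hx1, hx2⟩
    rw [convexHull_pair] at hx
    obtain ⟨a, b, ha, hb, hab, hx⟩ := hx
    have hF : ∀ s : E, Fm p q s ((b - a) / 2, 0) = a • p + b • q := by
      intro s
      have : b = 1 - a := by linarith
      subst this
      simp only [Fm]
      module
    have e1 : c = ((b - a) / 2, 0) := by
      apply Fm_inj h
      rw [hF, hx, Fi_pos _ _ _ _ h0c]
    have e2 : (d.1, -d.2) = ((b - a) / 2, 0) := by
      apply Fm_inj h'
      rw [hF, hx, hcd, Fi_neg _ _ _ _ h0d]
    have e3 := congrArg Prod.fst e2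
    have e4 := congrArg Prod.snd e2
    simp at e3 e4
    rw [e1]
    exact Prod.ext e3.symm e4.symm
  intro c hc d hd hcd
  rcases le_total 0 c.2 with h1 | h1 <;> rcases le_total 0 d.2 with h2 | h2
  · rw [Fi_pos _ _ _ _ h1, Fi_pos _ _ _ _ h2] at hcd
    exact Fm_inj h hcd
  · exact key c hc d hd h1 h2 hcd
  · exact (key d hd c hc h2 h1 hcd.symm).symm
  · rw [Fi_neg _ _ _ _ h1, Fi_neg _ _ _ _ h2] at hcd
    have := Fm_inj h' hcd
    have e3 := congrArg Prod.fst this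
    have e4 := congrArg Prod.snd this
    simp at e3 e4
    exact Prod.ext e3 e4

lemma HD_sub_Cp : HD (1 / 4) ⊆ Cp := by
  rintro c ⟨h1, h2⟩
  simp only [Prod.norm_def, Real.norm_eq_abs, sup_lt_iff] at h2
  refine ⟨?_, h1⟩
  show |c.1| ≤ (1 - |c.2|) / 2
  linarith [h2.1, h2.2]

end tri

lemma edge_sub (K : SimplicialComplex ℝ (Pt n)) {e s : Finset (Pt n)} (he : e ∈ K.faces)
    (hs : s ∈ K.faces) {p q : Pt n} (hpq : p ≠ q) (hepq : (e : Set (Pt n)) = {p, q})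
    (hx : midpoint ℝ p q ∈ convexHull ℝ (s : Set (Pt n))) : e ⊆ s := by
  have hxe : midpoint ℝ p q ∈ convexHull ℝ (e : Set (Pt n)) := by
    rw [hepq, convexHull_pair]; exact midpoint_mem_segment p q
  have h := K.inter_subset_convexHull hs he ⟨hx, hxe⟩
  rw [hepq] at h
  have hp : p ∈ s := by
    by_contra hp
    have : (s : Set (Pt n)) ∩ {p, q} ⊆ {q} := by
      rintro y ⟨hy, rfl | rfl⟩
      · exact absurd hy hp
      · rfl
    have := convexHull_mono this h
    rw [convexHull_singleton] at this
    exact hpq ((midpoint_eq_right_iff ℝ).1 this)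
  have hq : q ∈ s := by
    by_contra hq
    have : (s : Set (Pt n)) ∩ {p, q} ⊆ {p} := by
      rintro y ⟨hy, rfl | rfl⟩
      · rfl
      · exact absurd hy hq
    have := convexHull_mono this h
    rw [convexHull_singleton] at this
    exact hpq ((midpoint_eq_left_iff ℝ).1 this)
  intro y hy
  have : y ∈ (e : Set (Pt n)) := hy
  rw [hepq] at this
  rcases this with rfl | rfl <;> assumption

lemma local_struct (K : SimplicialComplex ℝ (Pt n)) (hfin : K.faces.Finite)
    (hdim : TwoDimensional K) {e : Finset (Pt n)} (he : e ∈ K.faces) {p q : Pt n} (hpq : p ≠ q)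
    (hepq : (e : Set (Pt n)) = {p, q}) (hne : (trianglesContaining K e).Nonempty) :
    (⋃ t ∈ trianglesContaining K e, convexHull ℝ (t : Set (Pt n))) ∈
      𝓝[K.space] (midpoint ℝ p q) := by
  have hcard : e.card = 2 := by
    have : e = {p, q} := by apply Finset.coe_injective; simp [hepq]
    rw [this, Finset.card_pair hpq]
  have hO : (⋂ s ∈ {s | s ∈ K.faces ∧ midpoint ℝ p q ∉ convexHull ℝ (s : Set (Pt n))},
      (convexHull ℝ (s : Set (Pt n)))ᶜ) ∈ 𝓝 (midpoint ℝ p q) := by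
    rw [biInter_mem (hfin.subset fun s hs => hs.1)]
    intro s hs
    exact (s.finite_toSet.isClosed_convexHull ℝ).isOpen_compl.mem_nhds hs.2
  filter_upwards [mem_nhdsWithin_of_mem_nhds hO, self_mem_nhdsWithin] with y hy hyK
  obtain ⟨s, hs, hys⟩ := SimplicialComplex.mem_space_iff.1 hyK
  have hxs : midpoint ℝ p q ∈ convexHull ℝ (s : Set (Pt n)) := by
    by_contra hxs
    exact mem_iInter₂.1 hy s ⟨hs, hxs⟩ hys
  have hes := edge_sub K he hs hpq hepq hxs
  by_cases h3 : s.card = 3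
  · exact mem_biUnion (show s ∈ trianglesContaining K e from ⟨hs, h3, hes⟩) hys
  · have h4 := hdim s hs
    have : e = s := Finset.eq_of_subset_of_card_le hes (by omega)
    obtain ⟨t, ht⟩ := hne
    exact mem_biUnion ht (convexHull_mono (Finset.coe_subset.2 (this ▸ ht.2.2)) hys)

lemma tri_form (K : SimplicialComplex ℝ (Pt n)) {e t : Finset (Pt n)} {p q : Pt n} (hpq : p ≠ q)
    (hepq : (e : Set (Pt n)) = {p, q}) (ht : t ∈ trianglesContaining K e) :
    ∃ r, (t : Set (Pt n)) = {p, q, r} ∧ r ≠ p ∧ r ≠ q ∧ AffineIndependent ℝ ![p, q, r] := by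
  classical
  have hee : e = {p, q} := by apply Finset.coe_injective; simp [hepq]
  have hcard : e.card = 2 := by rw [hee, Finset.card_pair hpq]
  obtain ⟨htK, ht3, hsub⟩ := ht
  have h1 : (t \ e).card = 1 := by
    rw [Finset.card_sdiff_of_subset hsub]; omega
  obtain ⟨r, hr⟩ := Finset.card_eq_one.1 h1
  have hrt : r ∈ t \ e := by rw [hr]; simp
  have hset : (t : Set (Pt n)) = {p, q, r} := by
    have : t = e ∪ (t \ e) := (Finset.union_sdiff_of_subset hsub).symm
    rw [this, hr, hee]
    ext; simp
  rw [Finset.mem_sdiff, hee] at hrt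
  simp at hrt
  refine ⟨r, hset, hrt.2.1, hrt.2.2, ?_⟩
  have hind := K.indep htK
  have hmem : ∀ i : Fin 3, ![p, q, r] i ∈ t := by
    intro i
    have : ![p, q, r] i ∈ (t : Set (Pt n)) := by
      rw [hset]; fin_cases i <;> simp
    exact this
  have hinj : Function.Injective ![p, q, r] := by
    have h1 := hrt.2.1
    have h2 := hrt.2.2
    intro i j hij
    fin_cases i <;> fin_cases j <;> simp [hpq, hpq.symm, h1, h2, Ne.symm h1, Ne.symm h2] at hij ⊢
  exact hind.comp_embedding ⟨fun i : Fin 3 => (⟨![p, q, r] i, hmem i⟩ : t), fun i j hij =>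
    hinj (congrArg Subtype.val hij)⟩

end helpers

/-- the midpoint of an interior edge has a neighborhood in `|K|` homeomorphic to an
open subset of `ℝ²`; the midpoint of a boundary edge has a neighborhood homeomorphic to an open
subset of the closed half-plane but no neighborhood homeomorphic to an open subset of `ℝ²`. -/
theorem midpoint_nbhd_of_interior_or_boundary (K : SimplicialComplex ℝ (Pt n))
    (hfin : K.faces.Finite) (hdim : TwoDimensional K)
    (e : Finset (Pt n)) (he : e ∈ K.faces) (p q : Pt n) (hpq : p ≠ q)
    (hepq : (e : Set (Pt n)) = {p, q}) :
    (IsInteriorEdge K e → HasPlanarNbhd K (midpoint ℝ p q)) ∧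
    (IsBoundaryEdge K e →
      HasHalfPlanarNbhd K (midpoint ℝ p q) ∧ ¬ HasPlanarNbhd K (midpoint ℝ p q)) := by

  classical
  constructor
  · rintro ⟨-, -, h2⟩
    obtain ⟨t₁, t₂, hne, hT⟩ := Set.ncard_eq_two.1 h2
    have ht₁ : t₁ ∈ trianglesContaining K e := by rw [hT]; simp
    have ht₂ : t₂ ∈ trianglesContaining K e := by rw [hT]; simp
    have hloc := local_struct K hfin hdim he hpq hepq ⟨t₁, ht₁⟩
    obtain ⟨r, hr, hrp, hrq, hri⟩ := tri_form K hpq hepq ht₁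
    obtain ⟨r', hr', hrp', hrq', hri'⟩ := tri_form K hpq hepq ht₂
    rw [hT, Set.biUnion_pair, hr, hr', ← Fi_image, ← Fi_zero p q r r'] at hloc
    have hrr : r ≠ r' := by
      rintro rfl
      exact hne (Finset.coe_injective (hr.trans hr'.symm))
    have hinj : Set.InjOn (Fi p q r r') Ci := by
      refine Fi_inj hri hri' ?_
      have h := K.inter_subset_convexHull ht₁.1 ht₂.1
      rw [hr, hr'] at h
      refine h.trans (convexHull_mono ?_)
      rintro y ⟨hy1, hy2⟩
      simp only [Set.mem_insert_iff, Set.mem_singleton_iff] at hy1 hy2 ⊢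
      rcases hy1 with h | h | h
      · exact Or.inl h
      · exact Or.inr h
      · subst h; tauto
    have hsub : Fi p q r r' '' Ci ⊆ K.space := by
      rw [Fi_image, ← hr, ← hr']
      exact Set.union_subset (K.convexHull_subset_space ht₁.1) (K.convexHull_subset_space ht₂.1)
    have hc := (Fi_cont p q r r').continuousOn (s := Ci)
    have hn := nhds_of_compact Ci_compact hc hinj Wi_open zero_mem_Wi (Wi_sub zero_mem_Wi)
    rw [Set.inter_eq_left.2 Wi_sub] at hn
    refine ⟨Fi p q r r' '' Wi, (Set.image_mono Wi_sub).trans hsub, ?_, Wi, Wi_open,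
      homeo_of_compact Ci_compact hc hinj Wi_sub⟩
    rw [← Fi_zero p q r r']
    exact nhdsWithin_le_iff.2 hloc hn
  · rintro ⟨-, -, h1⟩
    obtain ⟨t, hT⟩ := Set.ncard_eq_one.1 h1
    have ht : t ∈ trianglesContaining K e := by rw [hT]; simp
    have hloc := local_struct K hfin hdim he hpq hepq ⟨t, ht⟩
    obtain ⟨r, hr, hrp, hrq, hri⟩ := tri_form K hpq hepq ht
    rw [hT, Set.biUnion_singleton, hr, ← Fm_image, ← Fm_zero p q r] at hloc
    have hinj : Set.InjOn (Fm p q r) Cp := (Fm_inj hri).injOn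
    have hsub : Fm p q r '' Cp ⊆ K.space := by
      rw [Fm_image, ← hr]
      exact K.convexHull_subset_space ht.1
    have hc := (Fm_cont p q r).continuousOn (s := Cp)
    constructor
    · have hn := nhds_of_compact Cp_compact hc hinj Wi_open zero_mem_Wi
        ⟨Wi_sub zero_mem_Wi, le_refl (0 : ℝ)⟩
      obtain ⟨φ⟩ := homeo_of_compact Cp_compact hc hinj (Set.inter_subset_right (s := Wi))
      refine ⟨Fm p q r '' (Wi ∩ Cp), (Set.image_mono Set.inter_subset_right).trans hsub, ?_,
        Subtype.val ⁻¹' Wi, Wi_open.preimage continuous_subtype_val, ⟨φ.trans ?_⟩⟩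
      · rw [← Fm_zero p q r]
        exact nhdsWithin_le_iff.2 hloc hn
      · exact
          { toFun := fun c => ⟨⟨c.1, c.2.2.2⟩, c.2.1⟩
            invFun := fun c => ⟨c.1.1, c.2, Wi_sub c.2, c.1.2⟩
            left_inv := fun c => rfl
            right_inv := fun c => rfl
            continuous_toFun := by fun_prop
            continuous_invFun := by fun_prop }
    · rintro ⟨U, hUS, hU, V, hV, ⟨φ⟩⟩
      rw [← Fm_zero p q r] at hU
      exact no_planar Cp_compact hc hinj hsub hloc (by norm_num : (0 : ℝ) < 1 / 4)
        (fun c hc => hc.2) HD_sub_Cp hUS hU hV φ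

end PaperAlg
end

section
/- Let K be a finite 2-dimensional geometric simplicial complex in ℝⁿ that is locally planar. Then every vertex of K that belongs to some boundary edge belongs to exactly two boundary edges. -/
open Geometry

namespace PaperAlg

variable {n : ℕ}

theorem exp_const {A : Type*} [TopologicalSpace A] [PreconnectedSpace A] {g : A → ℂ}
    (hg : Continuous g) (h : ∀ a b, Complex.exp (g a) = Complex.exp (g b)) (a b : A) :
    g a = g b :=
  Complex.isCoveringMap_exp.const_of_comp hg (fun a b => Subtype.ext (h a b)) a b

theorem disc_log (f : ℂ → ℂ) (hf : ContinuousOn f {0}ᶜ) (h0 : ∀ z ≠ 0, f z ≠ 0) :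
    ∃ (k : ℤ) (l : ℂ → ℂ), ContinuousOn l {0}ᶜ ∧ ∀ z ≠ 0, f z = z ^ k * Complex.exp (l z) := by
  have hc : Continuous (fun w : ℂ => f (Complex.exp w)) :=
    hf.comp_continuous Complex.continuous_exp (fun w => by simp)
  obtain ⟨g, ⟨-, hg⟩, -⟩ := Complex.isCoveringMapOn_exp.existsUnique_continuousMap_lifts
    (A := ℂ) ⟨_, hc⟩ (a₀ := 0) (e₀ := Complex.log (f (Complex.exp 0)))
    (by simp only [ContinuousMap.coe_mk]; exact Complex.exp_log (h0 _ (Complex.exp_ne_zero _)))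
    (fun w => by simpa using h0 _ (Complex.exp_ne_zero w))
  have hg' : ∀ w, Complex.exp (g w) = f (Complex.exp w) := fun w => congrFun hg w
  set T : ℂ := 2 * Real.pi * Complex.I with hT
  have hper : ∀ w, Complex.exp (w + T) = Complex.exp w := fun w => Complex.exp_periodic w
  have hone : ∀ w, Complex.exp (g (w + T) - g w) = 1 := by
    intro w
    rw [Complex.exp_sub, hg', hg', hper]
    exact div_self (h0 _ (Complex.exp_ne_zero w))
  obtain ⟨k, hk⟩ := Complex.exp_eq_one_iff.1 (hone 0)
  have hk' : ∀ w, g (w + T) - g w = k * T := by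
    intro w
    rw [← hk]
    exact exp_const (g := fun w => g (w + T) - g w) (by fun_prop)
      (fun a b => by rw [hone, hone]) w 0
  -- periodic function
  have hkm : ∀ (m : ℤ) w, g (w + m * T) = g w + m * (k * T) := by
    intro m
    induction m using Int.induction_on with
    | zero => intro w; simp
    | succ i ih =>
      intro w
      have := hk' (w + i * T)
      have h2 := ih w
      push_cast at *
      rw [show w + (i + 1) * T = w + i * T + T by ring]
      linear_combination this + h2
    | pred i ih =>
      intro w
      have := hk' (w + (-i - 1) * T)
      have h2 := ih w
      push_cast at *
      rw [show w + (-i - 1) * T + T = w + -i * T by ring] at this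
      linear_combination h2 - this
  refine ⟨k, fun z => g (Complex.log z) - k * Complex.log z, ?_, ?_⟩
  · have key : ∀ w, g (Complex.log (Complex.exp w)) - k * Complex.log (Complex.exp w)
        = g w - k * w := by
      intro w
      obtain ⟨m, hm⟩ := Complex.exp_eq_exp_iff_exists_int.1
        (Complex.exp_log (Complex.exp_ne_zero w))
      rw [hm, ← hT, hkm]; ring
    have q : Topology.IsQuotientMap (fun z : ℂ ↦ (⟨_, z.exp_ne_zero⟩ : {z : ℂ // z ≠ 0})) := by
      refine IsOpenMap.isQuotientMap ?_ (by fun_prop)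
        fun z ↦ ⟨_, Subtype.ext (Complex.exp_log z.2)⟩
      exact (IsOpen.isOpenEmbedding_subtypeVal isClosed_singleton.1).isOpenMap_iff.mpr
        Complex.isOpenMap_exp
    have : Continuous (fun z : {z : ℂ // z ≠ 0} => g (Complex.log z) - k * Complex.log z) := by
      rw [q.continuous_iff]
      have : Continuous fun w => g w - k * w := by fun_prop
      convert this using 1
      ext w
      exact key w
    exact continuousOn_iff_continuous_domRestrict.2 this
  · intro z hz
    rw [Complex.exp_sub, hg', Complex.exp_log hz, Complex.exp_int_mul, Complex.exp_log hz]
    field_simp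

theorem disc_log2 (f₁ f₂ : ℂ → ℂ) (hf₁ : ContinuousOn f₁ {0}ᶜ) (h₁ : ∀ z ≠ 0, f₁ z ≠ 0)
    (hf₂ : ContinuousOn f₂ {0}ᶜ) (h₂ : ∀ z ≠ 0, f₂ z ≠ 0) :
    ∃ (m k : ℤ) (l : ℂ → ℂ), (m ≠ 0 ∨ k ≠ 0) ∧ ContinuousOn l {0}ᶜ ∧
      ∀ z ≠ 0, f₁ z ^ m * f₂ z ^ k = Complex.exp (l z) := by
  obtain ⟨a, l₁, c₁, e₁⟩ := disc_log f₁ hf₁ h₁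
  obtain ⟨b, l₂, c₂, e₂⟩ := disc_log f₂ hf₂ h₂
  by_cases hab : a = 0
  · refine ⟨1, 0, l₁, by simp, c₁, fun z hz => ?_⟩
    rw [e₁ z hz, hab]; simp
  · refine ⟨b, -a, fun z => b * l₁ z - a * l₂ z, by simp [hab], by fun_prop, fun z hz => ?_⟩
    rw [e₁ z hz, e₂ z hz, mul_zpow, mul_zpow, Complex.exp_sub, Complex.exp_int_mul,
      Complex.exp_int_mul, ← zpow_mul, ← zpow_mul, zpow_neg, mul_neg, mul_comm b a, zpow_neg]
    have := zpow_ne_zero (a * b) hz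
    field_simp

theorem circle_log (m : ℤ) (L : ℝ → ℂ) (hL : Continuous L) (hp : L (2 * Real.pi) = L 0)
    (h : ∀ t : ℝ, Complex.exp (t * Complex.I) ^ m = Complex.exp (L t)) : m = 0 := by
  have h1 : ∀ t : ℝ, Complex.exp (L t - m * (t * Complex.I)) = 1 := by
    intro t
    rw [Complex.exp_sub, ← h, Complex.exp_int_mul]
    exact div_self (zpow_ne_zero _ (Complex.exp_ne_zero _))
  have := exp_const (g := fun t : ℝ => L t - m * (t * Complex.I)) (by fun_prop)
    (fun a b => by rw [h1, h1]) (2 * Real.pi) 0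
  simp [hp] at this
  exact this

theorem slit_loop (m k : ℤ) (p q L : ℝ → ℂ) (hp : Continuous p) (hq : Continuous q)
    (hL : Continuous L) (pp : p (2 * Real.pi) = p 0) (qp : q (2 * Real.pi) = q 0)
    (Lp : L (2 * Real.pi) = L 0)
    (sp : ∀ t : ℝ, p t * Complex.exp (-(t * Complex.I)) ∈ Complex.slitPlane)
    (sq : ∀ t, q t ∈ Complex.slitPlane)
    (h : ∀ t, p t ^ m * q t ^ k = Complex.exp (L t)) : m = 0 := by
  refine circle_log m (fun t => L t - m * Complex.log (p t * Complex.exp (-(t * Complex.I)))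
    - k * Complex.log (q t)) ?_ ?_ ?_
  · refine (hL.sub (continuous_const.mul (Continuous.clog ?_ sp))).sub
      (continuous_const.mul (Continuous.clog hq sq))
    fun_prop
  · have : Complex.exp (-(((2 * Real.pi : ℝ) : ℂ) * Complex.I)) = 1 := by
      rw [Complex.exp_neg]; push_cast; rw [Complex.exp_two_pi_mul_I]; simp
    simp only [pp, qp, Lp, this]; simp
  · intro t
    have h1 := Complex.slitPlane_ne_zero (sp t)
    have h2 := Complex.slitPlane_ne_zero (sq t)
    rw [Complex.exp_sub, Complex.exp_sub, Complex.exp_int_mul, Complex.exp_int_mul,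
      Complex.exp_log h1, Complex.exp_log h2, ← h, mul_zpow, Complex.exp_neg, inv_zpow]
    have h3 : p t ≠ 0 := left_ne_zero_of_mul h1
    have h4 := zpow_ne_zero m h3
    have h5 := zpow_ne_zero k h2
    have h6 := zpow_ne_zero m (Complex.exp_ne_zero (t * Complex.I))
    field_simp

open Metric Set

theorem model0 {E : Type*} [MetricSpace E] [Nonempty E] {S U : Set E} {x : E} (hUS : U ⊆ S)
    (hU : U ∈ nhdsWithin x S) (hx : x ∈ S) {V : Set ℂ} (φ : U ≃ₜ V) (r : ℂ → ℂ)
    (hr : Continuous r) (hrV : ∀ z ∈ V, r z = z)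
    (hrb : ∀ p ∈ V, ∃ ρ > 0, ∀ z ∈ ball p ρ, z ≠ p → r z ∈ V ∧ r z ≠ p) {ε : ℝ} (hε : 0 < ε) :
    ∃ δ > 0, ∃ (ψ : ℂ → E) (σ : E → ℂ), ContinuousOn ψ {0}ᶜ ∧
      (∀ z ≠ 0, ψ z ∈ S ∧ ψ z ∈ ball x ε ∧ ψ z ≠ x) ∧
      ContinuousOn σ ((S ∩ ball x δ) \ {x}) ∧
      ∀ y ∈ S, y ∈ ball x δ → y ≠ x → σ y ≠ 0 ∧ ψ (σ y) = y := by
  classical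
  have hxU : x ∈ U := mem_of_mem_nhdsWithin hx hU
  set p : V := φ ⟨x, hxU⟩ with hp
  have hsp : φ.symm p = ⟨x, hxU⟩ := by simp [hp]
  obtain ⟨ρ₀, hρ₀, h0⟩ := hrb p p.2
  have h1 : ∀ᶠ z in nhds p, (φ.symm z : E) ∈ ball x ε := by
    have hc : Continuous fun z => (φ.symm z : E) := by fun_prop
    apply hc.continuousAt.eventually_mem
    apply isOpen_ball.mem_nhds
    rw [hsp]; exact mem_ball_self hε
  obtain ⟨ρ₁, hρ₁, h1⟩ := Metric.eventually_nhds_iff_ball.1 h1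
  have h2 : ∀ᶠ z in nhds (p : ℂ), r z ∈ ball (p : ℂ) ρ₁ := by
    apply hr.continuousAt.eventually_mem
    rw [hrV _ p.2]; exact ball_mem_nhds _ hρ₁
  obtain ⟨ρ₂, hρ₂, h2⟩ := Metric.eventually_nhds_iff_ball.1 h2
  set ρ := min ρ₀ ρ₂ with hρdef
  have hρ : 0 < ρ := lt_min hρ₀ hρ₂
  set b : OpenPartialHomeomorph ℂ ℂ := OpenPartialHomeomorph.univBall (p : ℂ) ρ with hb
  have hbs : b.source = univ := OpenPartialHomeomorph.univBall_source _ _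
  have hbt : b.target = ball (p : ℂ) ρ := OpenPartialHomeomorph.univBall_target _ hρ
  have hb0 : b 0 = p := OpenPartialHomeomorph.univBall_apply_zero _ _
  have hbc : Continuous b := OpenPartialHomeomorph.continuous_univBall _ _
  have hbm : ∀ z, b z ∈ ball (p : ℂ) ρ := fun z => by
    rw [← hbt]; exact b.map_source (by simp [hbs])
  have hbne : ∀ z ≠ 0, b z ≠ p := by
    intro z hz h
    rw [← hb0] at h
    exact hz (b.injOn (by simp [hbs]) (by simp [hbs]) h)
  -- delta
  have h3 : ∀ᶠ y in nhds (⟨x, hxU⟩ : U), (φ y : ℂ) ∈ ball (p : ℂ) ρ := by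
    have hc : Continuous fun y => (φ y : ℂ) := by fun_prop
    apply hc.continuousAt.eventually_mem
    exact ball_mem_nhds _ hρ
  obtain ⟨δ₁, hδ₁, h3⟩ := Metric.eventually_nhds_iff_ball.1 h3
  obtain ⟨δ₂, hδ₂, h4⟩ := Metric.mem_nhdsWithin_iff.1 hU
  have hVr : ∀ z ≠ 0, r (b z) ∈ V ∧ r (b z) ≠ p := fun z hz =>
    h0 _ (ball_subset_ball (min_le_left _ _) (hbm z)) (hbne z hz)
  refine ⟨min δ₁ δ₂, lt_min hδ₁ hδ₂,
    fun z => if h : r (b z) ∈ V then (φ.symm ⟨r (b z), h⟩ : E) else x,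
    fun y => if h : y ∈ U then b.symm (φ ⟨y, h⟩) else 0, ?_, ?_, ?_, ?_⟩
  · rw [continuousOn_iff_continuous_domRestrict]
    have : Continuous fun z : ({0}ᶜ : Set ℂ) => (φ.symm ⟨r (b z), (hVr z z.2).1⟩ : E) := by
      fun_prop
    convert this using 1
    ext z
    simp [domRestrict, (hVr z z.2).1]
  · intro z hz
    obtain ⟨hv, hne⟩ := hVr z hz
    simp only [hv, dif_pos]
    refine ⟨hUS (Subtype.coe_prop _), ?_, ?_⟩
    · apply h1
      exact h2 _ (ball_subset_ball (min_le_right _ _) (hbm z))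
    · intro h
      apply hne
      have : φ.symm ⟨r (b z), hv⟩ = φ.symm p := by rw [hsp]; exact Subtype.ext h
      exact congrArg Subtype.val (φ.symm.injective this)
  · rw [continuousOn_iff_continuous_domRestrict]
    have hin : ∀ y : ((S ∩ ball x (min δ₁ δ₂)) \ {x} : Set E), (y : E) ∈ U := fun y =>
      h4 ⟨ball_subset_ball (min_le_right _ _) y.2.1.2, y.2.1.1⟩
    have hc : Continuous fun y : ((S ∩ ball x (min δ₁ δ₂)) \ {x} : Set E) =>
        b.symm (φ ⟨y, hin y⟩) := by
      refine b.symm.continuousOn.comp_continuous (by fun_prop) ?_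
      intro y
      show _ ∈ b.target
      rw [hbt]
      exact h3 ⟨y, hin y⟩ (ball_subset_ball (min_le_left _ _) y.2.1.2)
    convert hc using 1
    ext y
    simp [domRestrict, hin y]
  · intro y hyS hy hyx
    have hyU : y ∈ U := h4 ⟨ball_subset_ball (min_le_right _ _) hy, hyS⟩
    have hyb : (φ ⟨y, hyU⟩ : ℂ) ∈ b.target := by
      rw [hbt]; exact h3 ⟨y, hyU⟩ (ball_subset_ball (min_le_left _ _) hy)
    have hri : b (b.symm (φ ⟨y, hyU⟩)) = φ ⟨y, hyU⟩ := b.right_inv hyb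
    simp only [hyU, dif_pos]
    refine ⟨?_, ?_⟩
    · intro h
      rw [h, hb0] at hri
      apply hyx
      have := φ.injective (Subtype.ext hri)
      exact (congrArg Subtype.val this).symm
    · have : r (b (b.symm (φ ⟨y, hyU⟩))) = φ ⟨y, hyU⟩ := by
        rw [hri]; exact hrV _ (Subtype.coe_prop _)
      simp [this]

open Metric Set

theorem model (K : SimplicialComplex ℝ (Pt n)) {x : Pt n} (hx : IsLocallyPlanarPt K x)
    {ε : ℝ} (hε : 0 < ε) :
    ∃ δ > 0, ∃ (ψ : ℂ → Pt n) (σ : Pt n → ℂ), ContinuousOn ψ {0}ᶜ ∧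
      (∀ z ≠ 0, ψ z ∈ K.space ∧ ψ z ∈ ball x ε ∧ ψ z ≠ x) ∧
      ContinuousOn σ ((K.space ∩ ball x δ) \ {x}) ∧
      ∀ y ∈ K.space, y ∈ ball x δ → y ≠ x → σ y ≠ 0 ∧ ψ (σ y) = y := by
  obtain ⟨hxS, ⟨U, hUS, hU, V, hV, ⟨φ⟩⟩ | ⟨U, hUS, hU, V, hV, ⟨φ⟩⟩⟩ := hx
  · let e : ℝ × ℝ ≃ₜ ℂ := Complex.equivRealProdCLM.symm.toHomeomorph
    refine model0 hUS hU hxS (φ.trans (e.image V)) id continuous_id (fun _ _ => rfl) ?_ hε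
    intro p hp
    have ho : IsOpen (e '' V) := e.isOpenMap _ hV
    obtain ⟨ρ, hρ, h⟩ := Metric.isOpen_iff.1 ho p hp
    exact ⟨ρ, hρ, fun z hz hne => ⟨h hz, hne⟩⟩
  · let e : ℝ × ℝ ≃ₜ ℂ := Complex.equivRealProdCLM.symm.toHomeomorph
    have hem : Topology.IsEmbedding (fun q : HalfPlane => e q) :=
      e.isEmbedding.comp Topology.IsEmbedding.subtypeVal
    have hre : ∀ q, (e q).re = q.1 := fun q => by simp [e]
    have him : ∀ q, (e q).im = q.2 := fun q => by simp [e]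
    have hmem : ∀ z : ℂ, z ∈ (fun q : HalfPlane => e q) '' V ↔
        ∃ h : 0 ≤ z.im, (⟨(z.re, z.im), h⟩ : HalfPlane) ∈ V := by
      intro z
      constructor
      · rintro ⟨q, hq, rfl⟩
        have : 0 ≤ (e q).im := by rw [him]; exact q.2
        refine ⟨this, ?_⟩
        convert hq
        exact Subtype.ext (Prod.ext (hre _).symm (him _).symm).symm
      · rintro ⟨h, hz⟩
        exact ⟨_, hz, by apply Complex.ext <;> simp [hre, him]⟩
    have hrc : Continuous (fun z : ℂ => (⟨z.re, |z.im|⟩ : ℂ)) := by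
      have : Continuous (fun z : ℂ => ((z.re : ℂ) + (|z.im| : ℝ) * Complex.I)) := by fun_prop
      convert this using 2 with z
      exact Complex.mk_eq_add_mul_I _ _
    refine model0 hUS hU hxS (φ.trans (hem.homeomorphImage V))
      (fun z => ⟨z.re, |z.im|⟩) hrc ?_ ?_ hε
    · intro z hz
      obtain ⟨h, -⟩ := (hmem z).1 hz
      simp [abs_of_nonneg h]
    · intro p hp
      obtain ⟨hp0, hpV⟩ := (hmem p).1 hp
      have h1 : ∀ᶠ z in nhds p, (⟨z.re, |z.im|⟩ : ℂ) ∈ (fun q : HalfPlane => e q) '' V := by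
        have hcc : Continuous fun z : ℂ => (⟨(z.re, |z.im|), show (0 : ℝ) ≤ |z.im| from abs_nonneg _⟩ : HalfPlane) := by
          fun_prop
        have := hcc.continuousAt.eventually_mem (x := p) (s := V) (hV.mem_nhds (by
          simpa [abs_of_nonneg hp0] using hpV))
        filter_upwards [this] with z hz
        exact (hmem _).2 ⟨abs_nonneg _, hz⟩
      have h2 : ∀ᶠ z in nhds p, z ≠ p → (⟨z.re, |z.im|⟩ : ℂ) ≠ p := by
        rcases hp0.eq_or_lt with h0 | h0
        · refine Filter.Eventually.of_forall fun z hz h => hz ?_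
          have h3 := congrArg Complex.re h
          have h4 := congrArg Complex.im h
          simp only [← h0, abs_eq_zero] at h3 h4
          exact Complex.ext h3 (by rw [h4, ← h0])
        · have : ∀ᶠ z : ℂ in nhds p, 0 < z.im :=
            Complex.continuous_im.continuousAt.eventually_mem (isOpen_Ioi.mem_nhds h0)
          filter_upwards [this] with z hz hne
          simpa [abs_of_pos hz] using hne
      obtain ⟨ρ, hρ, h⟩ := Metric.eventually_nhds_iff_ball.1 (h1.and h2)
      exact ⟨ρ, hρ, fun z hz hne => ⟨(h z hz).1, (h z hz).2 hne⟩⟩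

/-- Two maps to `ℂ*` near a locally planar point are multiplicatively dependent up to `exp`. -/
theorem lp_log (K : SimplicialComplex ℝ (Pt n)) {x : Pt n} (hx : IsLocallyPlanarPt K x)
    {ε : ℝ} (hε : 0 < ε) (f₁ f₂ : Pt n → ℂ) (hf₁ : Continuous f₁) (hf₂ : Continuous f₂)
    (h₁ : ∀ y ∈ K.space, y ∈ ball x ε → y ≠ x → f₁ y ≠ 0)
    (h₂ : ∀ y ∈ K.space, y ∈ ball x ε → y ≠ x → f₂ y ≠ 0) :
    ∃ δ > 0, ∃ (m k : ℤ) (l : Pt n → ℂ), (m ≠ 0 ∨ k ≠ 0) ∧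
      ContinuousOn l ((K.space ∩ ball x δ) \ {x}) ∧
      ∀ y ∈ K.space, y ∈ ball x δ → y ≠ x → f₁ y ^ m * f₂ y ^ k = Complex.exp (l y) := by
  obtain ⟨δ, hδ, ψ, σ, hψ, hψm, hσ, hσψ⟩ := model K hx hε
  obtain ⟨m, k, l, hmk, hl, hexp⟩ := disc_log2 (f₁ ∘ ψ) (f₂ ∘ ψ)
    (hf₁.comp_continuousOn hψ) (fun z hz => h₁ _ (hψm z hz).1 (hψm z hz).2.1 (hψm z hz).2.2)
    (hf₂.comp_continuousOn hψ) (fun z hz => h₂ _ (hψm z hz).1 (hψm z hz).2.1 (hψm z hz).2.2)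
  refine ⟨δ, hδ, m, k, l ∘ σ, hmk, hl.comp hσ ?_, ?_⟩
  · intro y hy
    exact (hσψ y hy.1.1 hy.1.2 hy.2).1
  · intro y hy hyb hyx
    obtain ⟨h0, he⟩ := hσψ y hy hyb hyx
    have := hexp _ h0
    simpa [he] using this

/-- Punctured neighborhoods of a locally planar point are connected. -/
theorem lp_conn (K : SimplicialComplex ℝ (Pt n)) {x : Pt n} (hx : IsLocallyPlanarPt K x)
    {ε : ℝ} (hε : 0 < ε) :
    ∃ δ > 0, ∃ C : Set (Pt n), IsPreconnected C ∧
      (∀ y ∈ C, y ∈ K.space ∧ y ∈ ball x ε ∧ y ≠ x) ∧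
      ∀ y ∈ K.space, y ∈ ball x δ → y ≠ x → y ∈ C := by
  obtain ⟨δ, hδ, ψ, σ, hψ, hψm, hσ, hσψ⟩ := model K hx hε
  refine ⟨δ, hδ, ψ '' {0}ᶜ, IsPreconnected.image ?_ _ hψ, ?_, ?_⟩
  · exact (isConnected_compl_singleton_of_one_lt_rank (by simp) 0).isPreconnected
  · rintro _ ⟨z, hz, rfl⟩
    exact hψm z hz
  · intro y hy hyb hyx
    obtain ⟨h0, he⟩ := hσψ y hy hyb hyx
    exact ⟨_, h0, he⟩

theorem local_faces (K : SimplicialComplex ℝ (Pt n)) (hfin : K.faces.Finite) (x : Pt n) :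
    ∃ ε > 0, ∀ y ∈ ball x ε, ∀ s ∈ K.faces, y ∈ convexHull ℝ (s : Set (Pt n)) →
      x ∈ convexHull ℝ (s : Set (Pt n)) := by
  have : ∀ᶠ y in nhds x, ∀ s ∈ K.faces, y ∈ convexHull ℝ (s : Set (Pt n)) →
      x ∈ convexHull ℝ (s : Set (Pt n)) := by
    rw [Filter.eventually_all_finite hfin]
    intro s hs
    by_cases hx : x ∈ convexHull ℝ (s : Set (Pt n))
    · exact Filter.Eventually.of_forall fun _ _ => hx
    · have hc : IsClosed (convexHull ℝ (s : Set (Pt n))) := s.finite_toSet.isClosed_convexHull ℝ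
      filter_upwards [hc.isOpen_compl.mem_nhds hx] with y hy hy'
      exact absurd hy' hy
  obtain ⟨ε, hε, h⟩ := Metric.eventually_nhds_iff_ball.1 this
  exact ⟨ε, hε, h⟩

theorem mid_mem_face (K : SimplicialComplex ℝ (Pt n)) {v a : Pt n} (hva : v ≠ a)
    {s : Finset (Pt n)} (hs : s ∈ K.faces) {e : Finset (Pt n)} (he : e ∈ K.faces)
    (hev : (e : Set (Pt n)) = {v, a})
    (h : midpoint ℝ v a ∈ convexHull ℝ (s : Set (Pt n))) : v ∈ s ∧ a ∈ s := by
  have hme : midpoint ℝ v a ∈ convexHull ℝ (e : Set (Pt n)) := by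
    rw [hev, convexHull_pair]; exact midpoint_mem_segment _ _
  have h1 := K.inter_subset_convexHull he hs ⟨hme, h⟩
  rw [hev] at h1
  constructor
  · by_contra hv
    have : ({v, a} ∩ (s : Set (Pt n))) ⊆ {a} := by
      rintro y ⟨rfl | rfl, hy⟩
      · exact absurd hy hv
      · rfl
    have h2 := convexHull_mono (𝕜 := ℝ) this h1
    rw [convexHull_singleton] at h2
    exact hva ((midpoint_eq_right_iff (R := ℝ)).1 h2)
  · by_contra ha
    have : ({v, a} ∩ (s : Set (Pt n))) ⊆ {v} := by
      rintro y ⟨rfl | rfl, hy⟩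
      · rfl
      · exact absurd hy ha
    have h2 := convexHull_mono (𝕜 := ℝ) this h1
    rw [convexHull_singleton] at h2
    exact hva ((midpoint_eq_left_iff (R := ℝ)).1 h2)

/-- Union of the hulls of the faces other than `t`. -/
def others (K : SimplicialComplex ℝ (Pt n)) (t : Finset (Pt n)) : Set (Pt n) :=
  ⋃ s ∈ K.faces \ {t}, convexHull ℝ (s : Set (Pt n))

/-- The signed function, negative on `t` and positive off `t`. -/
noncomputable def sgnDist (K : SimplicialComplex ℝ (Pt n)) (t : Finset (Pt n)) (y : Pt n) : ℝ :=
  infDist y (convexHull ℝ (t : Set (Pt n))) - infDist y (others K t)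

theorem isClosed_hull (s : Finset (Pt n)) : IsClosed (convexHull ℝ (s : Set (Pt n))) :=
  s.finite_toSet.isClosed_convexHull ℝ

theorem isClosed_others (K : SimplicialComplex ℝ (Pt n)) (hfin : K.faces.Finite)
    (t : Finset (Pt n)) : IsClosed (others K t) :=
  (hfin.subset sdiff_subset).isClosed_biUnion fun s _ => isClosed_hull s

theorem continuous_sgnDist (K : SimplicialComplex ℝ (Pt n)) (t : Finset (Pt n)) :
    Continuous (sgnDist K t) :=
  (continuous_infDist_pt _).sub (continuous_infDist_pt _)

theorem sgnDist_nonneg (K : SimplicialComplex ℝ (Pt n)) {t : Finset (Pt n)} {y : Pt n}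
    (hy : y ∈ others K t) : 0 ≤ sgnDist K t y := by
  rw [sgnDist, infDist_zero_of_mem hy, sub_zero]; exact infDist_nonneg

theorem sgnDist_nonpos (K : SimplicialComplex ℝ (Pt n)) {t : Finset (Pt n)} {y : Pt n}
    (hy : y ∈ convexHull ℝ (t : Set (Pt n))) : sgnDist K t y ≤ 0 := by
  rw [sgnDist, infDist_zero_of_mem hy, zero_sub]; exact neg_nonpos.2 infDist_nonneg

theorem sgnDist_eq_zero (K : SimplicialComplex ℝ (Pt n)) (hfin : K.faces.Finite)
    {t : Finset (Pt n)} {y : Pt n} (ht : t.Nonempty) (ho : (others K t).Nonempty)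
    (hy : y ∈ convexHull ℝ (t : Set (Pt n)) ∨ y ∈ others K t) (h : sgnDist K t y = 0) :
    y ∈ convexHull ℝ (t : Set (Pt n)) ∧ y ∈ others K t := by
  have hne : (convexHull ℝ (t : Set (Pt n))).Nonempty := by simpa using ht
  rcases hy with hy | hy
  · refine ⟨hy, ((isClosed_others K hfin t).mem_iff_infDist_zero ho).2 ?_⟩
    rw [sgnDist, infDist_zero_of_mem hy] at h; linarith
  · refine ⟨((isClosed_hull t).mem_iff_infDist_zero hne).2 ?_, hy⟩
    rw [sgnDist, infDist_zero_of_mem hy] at h; linarith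

/-- near the midpoint of `va`, triangle `t` and others meet only in the edge. -/
theorem page_inter (K : SimplicialComplex ℝ (Pt n)) (hdim : TwoDimensional K)
    {v a : Pt n} (hva : v ≠ a) {e : Finset (Pt n)} (he : e ∈ K.faces)
    (hev : (e : Set (Pt n)) = {v, a}) {t : Finset (Pt n)} (ht : t ∈ K.faces) (htc : t.card = 3)
    {y : Pt n} (hl : ∀ s ∈ K.faces, y ∈ convexHull ℝ (s : Set (Pt n)) →
      midpoint ℝ v a ∈ convexHull ℝ (s : Set (Pt n)))
    (h1 : y ∈ convexHull ℝ (t : Set (Pt n))) (h2 : y ∈ others K t) :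
    y ∈ segment ℝ v a := by
  classical
  simp only [others, mem_iUnion, exists_prop] at h2
  obtain ⟨s, ⟨hs, hst⟩, hys⟩ := h2
  have hy := K.inter_subset_convexHull hs ht ⟨hys, h1⟩
  obtain ⟨hvs, has⟩ := mid_mem_face K hva hs he hev (hl s hs hys)
  obtain ⟨hvt, hat⟩ := mid_mem_face K hva ht he hev (hl t ht h1)
  have hsub : ({v, a} : Finset (Pt n)) ⊆ s ∩ t := by
    intro z hz
    simp only [Finset.mem_insert, Finset.mem_singleton] at hz
    rcases hz with rfl | rfl <;> simp [*]
  have hlt : (s ∩ t).card < 3 := by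
    by_contra hcon
    have h3 : s ∩ t = t := Finset.eq_of_subset_of_card_le Finset.inter_subset_right (by omega)
    have h4 : t ⊆ s := by rw [← h3]; exact Finset.inter_subset_left
    have := hdim s hs
    exact hst (Finset.eq_of_subset_of_card_le h4 (by omega)).symm
  have heq : ({v, a} : Finset (Pt n)) = s ∩ t :=
    Finset.eq_of_subset_of_card_le hsub (by rw [Finset.card_pair hva]; omega)
  have : ((s : Set (Pt n)) ∩ t) = {v, a} := by
    rw [← Finset.coe_inter, ← heq]; simp
  rwa [this, convexHull_pair] at hy

/-- The spine coordinate. -/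
noncomputable def spine (v a y : Pt n) : ℝ := inner ℝ (y - midpoint ℝ v a) (a - v)

theorem continuous_spine (v a : Pt n) : Continuous (spine v a) := by
  unfold spine; fun_prop

theorem spine_line (v a : Pt n) (c : ℝ) :
    spine v a (midpoint ℝ v a + c • (a - v)) = c * ‖a - v‖ ^ 2 := by
  simp [spine, inner_smul_left]

theorem seg_param {v a y : Pt n} (hy : y ∈ segment ℝ v a) :
    ∃ c : ℝ, y = midpoint ℝ v a + c • (a - v) := by
  obtain ⟨p, q, hp, hq, hpq, rfl⟩ := hy
  refine ⟨q - 1 / 2, ?_⟩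
  rw [midpoint_eq_smul_add]
  obtain rfl : p = 1 - q := by linarith
  simp only [invOf_eq_inv]
  module

theorem spine_ne {v a y : Pt n} (hva : v ≠ a) (hy : y ∈ segment ℝ v a)
    (hne : y ≠ midpoint ℝ v a) : spine v a y ≠ 0 := by
  obtain ⟨c, rfl⟩ := seg_param hy
  rw [spine_line]
  have : a - v ≠ 0 := sub_ne_zero.2 hva.symm
  have hc : c ≠ 0 := by rintro rfl; simp at hne
  exact mul_ne_zero hc (pow_ne_zero _ (norm_ne_zero_iff.2 this))

/-- The page map. -/
noncomputable def pageMap (K : SimplicialComplex ℝ (Pt n)) (v a : Pt n) (t : Finset (Pt n))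
    (y : Pt n) : ℂ := ⟨sgnDist K t y, spine v a y⟩

theorem continuous_pageMap (K : SimplicialComplex ℝ (Pt n)) (v a : Pt n) (t : Finset (Pt n)) :
    Continuous (pageMap K v a t) := by
  have h1 := continuous_sgnDist K t
  have h2 := continuous_spine v a
  have : Continuous (fun y => ((sgnDist K t y : ℂ) + (spine v a y : ℝ) * Complex.I)) := by
    fun_prop
  convert this using 2 with y
  exact Complex.mk_eq_add_mul_I _ _

theorem page_zero_s6 (K : SimplicialComplex ℝ (Pt n)) (hfin : K.faces.Finite) (hdim : TwoDimensional K)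
    {v a : Pt n} (hva : v ≠ a) {e : Finset (Pt n)} (he : e ∈ K.faces)
    (hev : (e : Set (Pt n)) = {v, a}) {t : Finset (Pt n)} (ht : t ∈ K.faces) (htc : t.card = 3)
    {y : Pt n} (hl : ∀ s ∈ K.faces, y ∈ convexHull ℝ (s : Set (Pt n)) →
      midpoint ℝ v a ∈ convexHull ℝ (s : Set (Pt n)))
    (hy : y ∈ K.space) (h0 : sgnDist K t y = 0) : y ∈ segment ℝ v a := by
  classical
  have het : e ≠ t := by
    rintro rfl
    have : e = {v, a} := by apply Finset.coe_injective; simpa using hev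
    rw [this, Finset.card_pair hva] at htc
    omega
  have hsub : ∀ s ∈ K.faces, s ≠ t → convexHull ℝ (s : Set (Pt n)) ⊆ others K t := by
    intro s hs hst
    exact subset_biUnion_of_mem (u := fun s : Finset (Pt n) => convexHull ℝ (s : Set (Pt n)))
      (show s ∈ K.faces \ {t} from ⟨hs, hst⟩)
  have hne : (others K t).Nonempty := by
    refine ⟨v, hsub e he het (subset_convexHull ℝ _ ?_)⟩
    rw [hev]; simp
  have htn : t.Nonempty := K.nonempty_of_mem_faces ht
  have hor : y ∈ convexHull ℝ (t : Set (Pt n)) ∨ y ∈ others K t := by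
    obtain ⟨s, hs, hys⟩ := K.mem_space_iff.1 hy
    by_cases hst : s = t
    · left; rwa [← hst]
    · right; exact hsub s hs hst hys
  obtain ⟨h1, h2⟩ := sgnDist_eq_zero K hfin htn hne hor h0
  exact page_inter K hdim hva he hev ht htc hl h1 h2

theorem page_mem_s6 {v a b : Pt n} {s c η : ℝ} (hη : 0 < η) (hη' : η ≤ 1 / 4) (hs : |s| ≤ 1)
    (hc : 0 ≤ c) (hc1 : c ≤ 1) :
    midpoint ℝ v a + η • (s • (a - v) + c • (b - midpoint ℝ v a)) ∈
      convexHull ℝ ({v, a, b} : Set (Pt n)) := by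
  obtain ⟨hs1, hs2⟩ := abs_le.1 hs
  have h1 : 0 ≤ 1 / 2 * (1 - η * c) - η * s := by nlinarith
  have h2 : 0 ≤ 1 / 2 * (1 - η * c) + η * s := by nlinarith
  have h3 : 0 ≤ η * c := by positivity
  have hv : v ∈ convexHull ℝ ({v, a, b} : Set (Pt n)) := subset_convexHull ℝ _ (by simp)
  have ha : a ∈ convexHull ℝ ({v, a, b} : Set (Pt n)) := subset_convexHull ℝ _ (by simp)
  have hb : b ∈ convexHull ℝ ({v, a, b} : Set (Pt n)) := subset_convexHull ℝ _ (by simp)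
  have := (convex_convexHull ℝ ({v, a, b} : Set (Pt n))).sum_mem (t := Finset.univ)
    (w := ![1 / 2 * (1 - η * c) - η * s, 1 / 2 * (1 - η * c) + η * s, η * c]) (z := ![v, a, b])
    (by intro i _; fin_cases i; exacts [h1, h2, h3]) (by simp [Fin.sum_univ_three]; ring)
    (by intro i _; fin_cases i <;> simpa)
  convert this using 1
  rw [midpoint_eq_smul_add]
  simp only [invOf_eq_inv, Fin.sum_univ_three, Matrix.cons_val_zero, Matrix.cons_val_one,
    Matrix.cons_val]
  module

theorem page_off (K : SimplicialComplex ℝ (Pt n)) {v a b : Pt n} {t : Finset (Pt n)}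
    (ht : t ∈ K.faces) (hts : (t : Set (Pt n)) = {v, a, b}) (hbv : b ≠ v) (hba : b ≠ a)
    {s c η : ℝ} (hη : 0 < η) (hc : 0 < c) :
    midpoint ℝ v a + η • (s • (a - v) + c • (b - midpoint ℝ v a)) ∉ segment ℝ v a := by
  intro h
  obtain ⟨d, hd⟩ := seg_param h
  have hbt : b ∈ t := by rw [← Finset.mem_coe, hts]; simp
  have hvt : v ∈ t := by rw [← Finset.mem_coe, hts]; simp
  have hat : a ∈ t := by rw [← Finset.mem_coe, hts]; simp
  have := (K.indep ht).notMem_affineSpan_sdiff ⟨b, hbt⟩ univ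
  apply this
  have hsub : ({v, a} : Set (Pt n)) ⊆ ((↑) : t → Pt n) '' (univ \ {⟨b, hbt⟩}) := by
    rintro z (rfl | rfl)
    · exact ⟨⟨z, hvt⟩, ⟨trivial, fun h => hbv (congrArg Subtype.val h).symm⟩, rfl⟩
    · exact ⟨⟨z, hat⟩, ⟨trivial, fun h => hba (congrArg Subtype.val h).symm⟩, rfl⟩
  refine affineSpan_mono ℝ hsub ?_
  have hb : b = AffineMap.lineMap v a (1 / 2 + (d - η * s) / (η * c)) := by
    have h1 : (η * c) • (b - midpoint ℝ v a) = (d - η * s) • (a - v) := by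
      have := add_left_cancel hd
      rw [sub_smul, ← this]
      module
    have h2 : b - midpoint ℝ v a = ((d - η * s) / (η * c)) • (a - v) := by
      have hne : η * c ≠ 0 := by positivity
      rw [div_eq_inv_mul, mul_smul, ← h1, smul_smul, inv_mul_cancel₀ hne, one_smul]
    rw [sub_eq_iff_eq_add.1 h2, AffineMap.lineMap_apply_module', midpoint_eq_smul_add]
    simp only [invOf_eq_inv]
    module
  show b ∈ _
  rw [hb]
  exact AffineMap.lineMap_mem_affineSpan_pair _ _ _

theorem slit_aux {c s g t : ℝ} (h : s ^ 2 + c ^ 2 = 1) (h1 : 0 < c → 0 < g) (h2 : c < 0 → g < 0)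
    (h3 : c = 0 → 0 < t * s) : 0 < g * c + t * s ∨ t * c - g * s ≠ 0 := by
  by_contra hcon
  push Not at hcon
  obtain ⟨ha, hb⟩ := hcon
  have hk : (g * c + t * s) * c = g := by linear_combination g * h + s * hb
  rcases lt_trichotomy c 0 with hc | hc | hc
  · have := h2 hc; nlinarith
  · have := h3 hc; rw [hc] at ha; linarith
  · have := h1 hc; nlinarith

/-- The loop around the midpoint of `va` through pages `b` and `b'`. -/
noncomputable def loop (v a b b' : Pt n) (η θ : ℝ) : Pt n :=
  midpoint ℝ v a + η • (Real.sin θ • (a - v) + (max (Real.cos θ) 0) • (b' - midpoint ℝ v a)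
    + (max (-Real.cos θ) 0) • (b - midpoint ℝ v a))

theorem loop_zero (K : SimplicialComplex ℝ (Pt n)) (hfin : K.faces.Finite) (hdim : TwoDimensional K)
    {v a : Pt n} (hva : v ≠ a) {e : Finset (Pt n)} (he : e ∈ K.faces)
    (hev : (e : Set (Pt n)) = {v, a}) {ti tj tk : Finset (Pt n)} {bj bk : Pt n}
    (hi : ti ∈ K.faces) (hic : ti.card = 3)
    (hj : tj ∈ K.faces) (hjc : tj.card = 3) (hjs : (tj : Set (Pt n)) = {v, a, bj})
    (hjv : bj ≠ v) (hja : bj ≠ a)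
    (hk : tk ∈ K.faces) (hks : (tk : Set (Pt n)) = {v, a, bk})
    (hkv : bk ≠ v) (hka : bk ≠ a) (hij : ti ≠ tj) (hik : ti ≠ tk) (hjk : tj ≠ tk)
    {δ : ℝ} (hδ : 0 < δ)
    (hl : ∀ y ∈ ball (midpoint ℝ v a) δ, ∀ s ∈ K.faces, y ∈ convexHull ℝ (s : Set (Pt n)) →
      midpoint ℝ v a ∈ convexHull ℝ (s : Set (Pt n)))
    (m k : ℤ) (l : Pt n → ℂ)
    (hlc : ContinuousOn l ((K.space ∩ ball (midpoint ℝ v a) δ) \ {midpoint ℝ v a}))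
    (hexp : ∀ y ∈ K.space, y ∈ ball (midpoint ℝ v a) δ → y ≠ midpoint ℝ v a →
      pageMap K v a tj y ^ m * pageMap K v a ti y ^ k = Complex.exp (l y)) : m = 0 := by
  classical
  set x := midpoint ℝ v a with hx
  set M := ‖a - v‖ + ‖bk - x‖ + ‖bj - x‖ with hM
  have hM0 : 0 ≤ M := by positivity
  obtain ⟨η, hη, hη4, hηM⟩ : ∃ η : ℝ, 0 < η ∧ η ≤ 1 / 4 ∧ η * M < δ := by
    refine ⟨min (1 / 4) (δ / (M + 1)), by positivity, min_le_left _ _, ?_⟩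
    calc min (1 / 4) (δ / (M + 1)) * M ≤ δ / (M + 1) * M :=
          mul_le_mul_of_nonneg_right (min_le_right _ _) hM0
      _ < δ := by rw [div_mul_eq_mul_div, div_lt_iff₀ (by positivity)]; nlinarith
  have hsub : ∀ t, ∀ s ∈ K.faces, s ≠ t → convexHull ℝ (s : Set (Pt n)) ⊆ others K t := by
    intro t s hs hst
    exact subset_biUnion_of_mem (u := fun s : Finset (Pt n) => convexHull ℝ (s : Set (Pt n)))
      (show s ∈ K.faces \ {t} from ⟨hs, hst⟩)
  set γ := loop v a bj bk η with hγ
  have hγc : Continuous γ := by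
    rw [hγ]; unfold loop; fun_prop
  have hγp : γ (2 * Real.pi) = γ 0 := by simp [hγ, loop]
  have hγb : ∀ θ, γ θ ∈ ball x δ := by
    intro θ
    rw [mem_ball_iff_norm]
    have h1 : ‖Real.sin θ • (a - v)‖ ≤ ‖a - v‖ := by
      rw [norm_smul]
      exact mul_le_of_le_one_left (norm_nonneg _) (Real.abs_sin_le_one θ)
    have h2 : ‖(max (Real.cos θ) 0) • (bk - x)‖ ≤ ‖bk - x‖ := by
      rw [norm_smul, Real.norm_of_nonneg (le_max_right _ _)]
      exact mul_le_of_le_one_left (norm_nonneg _) (max_le (Real.cos_le_one θ) zero_le_one)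
    have h3 : ‖(max (-Real.cos θ) 0) • (bj - x)‖ ≤ ‖bj - x‖ := by
      rw [norm_smul, Real.norm_of_nonneg (le_max_right _ _)]
      exact mul_le_of_le_one_left (norm_nonneg _)
        (max_le (by linarith [Real.neg_one_le_cos θ]) zero_le_one)
    have : γ θ - x = η • (Real.sin θ • (a - v) + (max (Real.cos θ) 0) • (bk - x)
      + (max (-Real.cos θ) 0) • (bj - x)) := by simp [hγ, loop, hx]
    rw [this, norm_smul, Real.norm_of_nonneg hη.le]
    refine lt_of_le_of_lt (mul_le_mul_of_nonneg_left ?_ hη.le) hηM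
    exact (norm_add₃_le).trans (by rw [hM]; gcongr)
  have hpos : ∀ θ, 0 ≤ Real.cos θ → γ θ = x + η • (Real.sin θ • (a - v) +
      Real.cos θ • (bk - x)) := by
    intro θ h
    simp [hγ, loop, hx, max_eq_left h, max_eq_right (neg_nonpos.2 h)]
  have hneg : ∀ θ, Real.cos θ ≤ 0 → γ θ = x + η • (Real.sin θ • (a - v) +
      (-Real.cos θ) • (bj - x)) := by
    intro θ h
    simp [hγ, loop, hx, max_eq_right h, max_eq_left (neg_nonneg.2 h)]
  have hposm : ∀ θ, 0 ≤ Real.cos θ → γ θ ∈ convexHull ℝ (tk : Set (Pt n)) := by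
    intro θ h
    rw [hpos θ h, hks]
    exact page_mem_s6 hη hη4 (Real.abs_sin_le_one θ) h (Real.cos_le_one θ)
  have hnegm : ∀ θ, Real.cos θ ≤ 0 → γ θ ∈ convexHull ℝ (tj : Set (Pt n)) := by
    intro θ h
    rw [hneg θ h, hjs]
    exact page_mem_s6 hη hη4 (Real.abs_sin_le_one θ) (by linarith)
      (by linarith [Real.neg_one_le_cos θ])
  have hoff : ∀ θ, Real.cos θ ≠ 0 → γ θ ∉ segment ℝ v a := by
    intro θ h
    rcases lt_or_gt_of_ne h with h | h
    · rw [hneg θ h.le]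
      exact page_off K hj hjs hjv hja hη (by linarith)
    · rw [hpos θ h.le]
      exact page_off K hk hks hkv hka hη h
  have hγS : ∀ θ, γ θ ∈ K.space := by
    intro θ
    rcases le_total 0 (Real.cos θ) with h | h
    · exact K.convexHull_subset_space hk (hposm θ h)
    · exact K.convexHull_subset_space hj (hnegm θ h)
  have hu : 0 < ‖a - v‖ := norm_pos_iff.2 (sub_ne_zero.2 hva.symm)
  have hsp : ∀ θ, Real.cos θ = 0 → 0 < spine v a (γ θ) * Real.sin θ := by
    intro θ h
    have h1 : γ θ = x + (η * Real.sin θ) • (a - v) := by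
      rw [hpos θ h.ge, h]; simp [mul_smul]
    rw [h1, spine_line]
    have : Real.sin θ ^ 2 = 1 := by have := Real.sin_sq_add_cos_sq θ; rw [h] at this; linarith
    have h2 : η * Real.sin θ * ‖a - v‖ ^ 2 * Real.sin θ = η * ‖a - v‖ ^ 2 := by
      linear_combination η * ‖a - v‖ ^ 2 * this
    rw [h2]; positivity
  have hγx : ∀ θ, γ θ ≠ x := by
    intro θ h
    by_cases hc : Real.cos θ = 0
    · have := hsp θ hc
      rw [h] at this
      simp [spine, hx] at this
    · apply hoff θ hc
      rw [h]; exact midpoint_mem_segment _ _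
  have hnz : ∀ t ∈ K.faces, t.card = 3 → ∀ θ, Real.cos θ ≠ 0 → sgnDist K t (γ θ) ≠ 0 := by
    intro t ht htc θ hc h0
    exact hoff θ hc (page_zero_s6 K hfin hdim hva he hev ht htc (hl _ (hγb θ)) (hγS θ) h0)
  refine slit_loop m k (fun θ => pageMap K v a tj (γ θ)) (fun θ => pageMap K v a ti (γ θ))
    (fun θ => l (γ θ)) ((continuous_pageMap K v a tj).comp hγc)
    ((continuous_pageMap K v a ti).comp hγc)
    (hlc.comp_continuous hγc fun θ => ⟨⟨hγS θ, hγb θ⟩, hγx θ⟩)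
    (by simp only [hγp]) (by simp only [hγp]) (by simp only [hγp]) ?_ ?_
    (fun θ => hexp _ (hγS θ) (hγb θ) (hγx θ))
  · intro θ
    have hE : Complex.exp (-((θ : ℂ) * Complex.I)) = ⟨Real.cos θ, -Real.sin θ⟩ := by
      rw [show -((θ : ℂ) * Complex.I) = ((-θ : ℝ) : ℂ) * Complex.I by push_cast; ring]
      apply Complex.ext
      · rw [Complex.exp_ofReal_mul_I_re, Real.cos_neg]
      · rw [Complex.exp_ofReal_mul_I_im, Real.sin_neg]
    rw [hE, Complex.mem_slitPlane_iff]
    have := slit_aux (Real.sin_sq_add_cos_sq θ) (g := sgnDist K tj (γ θ))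
      (t := spine v a (γ θ))
      (fun h => lt_of_le_of_ne (sgnDist_nonneg K (hsub tj tk hk hjk.symm (hposm θ h.le)))
        (hnz tj hj hjc θ h.ne').symm)
      (fun h => lt_of_le_of_ne (sgnDist_nonpos K (hnegm θ h.le)) (hnz tj hj hjc θ h.ne))
      (hsp θ)
    refine this.imp (fun h => ?_) (fun h => ?_)
    · simpa [pageMap] using h
    · have h' : spine v a (γ θ) * Real.cos θ - sgnDist K tj (γ θ) * Real.sin θ =
        (pageMap K v a tj (γ θ) * (⟨Real.cos θ, -Real.sin θ⟩ : ℂ)).im := by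
        simp [pageMap]; ring
      rwa [← h']
  · intro θ
    rw [Complex.mem_slitPlane_iff]
    by_cases hc : Real.cos θ = 0
    · right
      intro h
      have h' : spine v a (γ θ) = 0 := h
      have := hsp θ hc
      rw [h'] at this; simp at this
    · left
      refine lt_of_le_of_ne ?_ (hnz ti hi hic θ hc).symm
      rcases le_total 0 (Real.cos θ) with h | h
      · exact sgnDist_nonneg K (hsub ti tk hk hik.symm (hposm θ h))
      · exact sgnDist_nonneg K (hsub ti tj hj hij.symm (hnegm θ h))

theorem no_three (K : SimplicialComplex ℝ (Pt n)) (hfin : K.faces.Finite) (hdim : TwoDimensional K)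
    (hlp : LocallyPlanar K)
    {v a : Pt n} (hva : v ≠ a) {e : Finset (Pt n)} (he : e ∈ K.faces)
    (hev : (e : Set (Pt n)) = {v, a}) {t₁ t₂ t₃ : Finset (Pt n)} {b₁ b₂ b₃ : Pt n}
    (h₁ : t₁ ∈ K.faces) (c₁ : t₁.card = 3) (s₁ : (t₁ : Set (Pt n)) = {v, a, b₁})
    (v₁ : b₁ ≠ v) (a₁ : b₁ ≠ a)
    (h₂ : t₂ ∈ K.faces) (c₂ : t₂.card = 3) (s₂ : (t₂ : Set (Pt n)) = {v, a, b₂})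
    (v₂ : b₂ ≠ v) (a₂ : b₂ ≠ a)
    (h₃ : t₃ ∈ K.faces) (s₃ : (t₃ : Set (Pt n)) = {v, a, b₃})
    (v₃ : b₃ ≠ v) (a₃ : b₃ ≠ a) (h12 : t₁ ≠ t₂) (h13 : t₁ ≠ t₃) (h23 : t₂ ≠ t₃) : False := by
  have hxS : midpoint ℝ v a ∈ K.space := by
    apply K.convexHull_subset_space he
    rw [hev, convexHull_pair]; exact midpoint_mem_segment _ _
  obtain ⟨ε, hε, hl⟩ := local_faces K hfin (midpoint ℝ v a)
  have hnz : ∀ t ∈ K.faces, t.card = 3 → ∀ y ∈ K.space, y ∈ ball (midpoint ℝ v a) ε →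
      y ≠ midpoint ℝ v a → pageMap K v a t y ≠ 0 := by
    intro t ht htc y hy hyb hyx h0
    have hre : sgnDist K t y = 0 := congrArg Complex.re h0
    have him : spine v a y = 0 := congrArg Complex.im h0
    exact spine_ne hva (page_zero_s6 K hfin hdim hva he hev ht htc (hl _ hyb) hy hre) hyx him
  obtain ⟨δ, hδ, m, k, l, hmk, hlc, hexp⟩ := lp_log K (hlp _ hxS) hε (pageMap K v a t₁)
    (pageMap K v a t₂) (continuous_pageMap K v a t₁) (continuous_pageMap K v a t₂)
    (hnz t₁ h₁ c₁) (hnz t₂ h₂ c₂)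
  have hδ' : 0 < min δ ε := lt_min hδ hε
  have hl' : ∀ y ∈ ball (midpoint ℝ v a) (min δ ε), ∀ s ∈ K.faces,
      y ∈ convexHull ℝ (s : Set (Pt n)) → midpoint ℝ v a ∈ convexHull ℝ (s : Set (Pt n)) :=
    fun y hy => hl y (ball_subset_ball (min_le_right _ _) hy)
  have hlc' := hlc.mono (show (K.space ∩ ball (midpoint ℝ v a) (min δ ε)) \ {midpoint ℝ v a} ⊆ _
    from fun y hy => ⟨⟨hy.1.1, ball_subset_ball (min_le_left _ _) hy.1.2⟩, hy.2⟩)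
  have hexp' : ∀ y ∈ K.space, y ∈ ball (midpoint ℝ v a) (min δ ε) → y ≠ midpoint ℝ v a → _ :=
    fun y hy hyb hyx => hexp y hy (ball_subset_ball (min_le_left _ _) hyb) hyx
  rcases hmk with hm | hk
  · exact hm (loop_zero K hfin hdim hva he hev h₂ c₂ h₁ c₁ s₁ v₁ a₁ h₃ s₃ v₃ a₃ h12.symm h23 h13
      hδ' hl' m k l hlc' hexp')
  · exact hk (loop_zero K hfin hdim hva he hev h₁ c₁ h₂ c₂ s₂ v₂ a₂ h₃ s₃ v₃ a₃ h12 h13 h23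
      hδ' hl' k m l hlc' (fun y hy hyb hyx => by rw [mul_comm]; exact hexp' y hy hyb hyx))

theorem vertex_mem_face (K : SimplicialComplex ℝ (Pt n)) {v : Pt n} (hv : v ∈ K.vertices)
    {s : Finset (Pt n)} (hs : s ∈ K.faces) (h : v ∈ convexHull ℝ (s : Set (Pt n))) : v ∈ s := by
  have hv' : ({v} : Finset (Pt n)) ∈ K.faces := hv
  have h1 := K.inter_subset_convexHull hv' hs ⟨by simp, h⟩
  have h2 : (((({v} : Finset (Pt n)) : Set (Pt n)) ∩ s)).Nonempty :=
    convexHull_nonempty_iff.1 ⟨_, h1⟩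
  obtain ⟨z, hz, hzs⟩ := h2
  simp only [Finset.coe_singleton, mem_singleton_iff] at hz
  rwa [hz] at hzs

theorem near_point {v a : Pt n} (hva : a ≠ v) {δ : ℝ} (hδ : 0 < δ) :
    ∃ y ∈ segment ℝ v a, y ∈ ball v δ ∧ y ≠ v := by
  have hu : 0 < ‖a - v‖ := norm_pos_iff.2 (sub_ne_zero.2 hva)
  set η := min 1 (δ / (2 * ‖a - v‖)) with hη
  have hη0 : 0 < η := by positivity
  refine ⟨v + η • (a - v), ⟨1 - η, η, by linarith [min_le_left 1 (δ / (2 * ‖a - v‖))], hη0.le,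
    by ring, by module⟩, ?_, ?_⟩
  · rw [mem_ball_iff_norm, add_sub_cancel_left, norm_smul, Real.norm_of_nonneg hη0.le]
    calc η * ‖a - v‖ ≤ δ / (2 * ‖a - v‖) * ‖a - v‖ := by
          gcongr; exact min_le_right _ _
      _ = δ / 2 := by field_simp
      _ < δ := by linarith
  · intro h
    rw [add_eq_left, smul_eq_zero] at h
    rcases h with h | h
    · exact hη0.ne' h
    · exact hva (sub_eq_zero.1 h)

theorem link_preconnected (K : SimplicialComplex ℝ (Pt n)) (hfin : K.faces.Finite)
    (hlp : LocallyPlanar K) (v : Pt n) (hv : v ∈ K.vertices) :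
    (linkGraph K v).Preconnected := by
  classical
  intro a b
  by_contra hab
  set C : Set (Pt n) := {p | ∃ h : p ∈ linkVertices K v, (linkGraph K v).Reachable a ⟨p, h⟩}
    with hC
  have hv' : ({v} : Finset (Pt n)) ∈ K.faces := hv
  have hvS : v ∈ K.space := K.subset_space hv' (by simp)
  have dich : ∀ s ∈ K.faces, v ∈ s → (∀ p ∈ s, p ≠ v → p ∈ C) ∨ (∀ p ∈ s, p ≠ v → p ∉ C) := by
    intro s hs hvs
    by_contra hcon
    push Not at hcon
    obtain ⟨⟨q, hqs, hqv, hqC⟩, p, hps, hpv, hpC⟩ := hcon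
    have hpq : p ≠ q := by rintro rfl; exact hqC hpC
    apply hqC
    obtain ⟨hpL, hr⟩ := hpC
    have hqL : q ∈ linkVertices K v := by
      refine ⟨hqv, {v, q}, K.down_closed hs ?_ (by simp), by simp⟩
      intro z hz
      simp only [Finset.mem_insert, Finset.mem_singleton] at hz
      rcases hz with rfl | rfl <;> assumption
    refine ⟨hqL, hr.trans (SimpleGraph.Adj.reachable ?_)⟩
    refine ⟨hpq, {v, p, q}, K.down_closed hs ?_ (by simp), ?_, by simp⟩
    · intro z hz
      simp only [Finset.mem_insert, Finset.mem_singleton] at hz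
      rcases hz with rfl | rfl | rfl <;> assumption
    · exact Finset.card_eq_three.2 ⟨v, p, q, hpv.symm, hqv.symm, hpq, rfl⟩
  set FA : Set (Finset (Pt n)) := {s | s ∈ K.faces ∧ v ∈ s ∧ ∀ p ∈ s, p ≠ v → p ∈ C} with hFA
  set FB : Set (Finset (Pt n)) := {s | s ∈ K.faces ∧ v ∈ s ∧ ∀ p ∈ s, p ≠ v → p ∉ C} with hFB
  set A : Set (Pt n) := ⋃ s ∈ FA, convexHull ℝ (s : Set (Pt n)) with hA
  set B : Set (Pt n) := ⋃ s ∈ FB, convexHull ℝ (s : Set (Pt n)) with hB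
  have cA : IsClosed A := (hfin.subset fun s hs => hs.1).isClosed_biUnion fun s _ => isClosed_hull s
  have cB : IsClosed B := (hfin.subset fun s hs => hs.1).isClosed_biUnion fun s _ => isClosed_hull s
  obtain ⟨ε, hε, hl⟩ := local_faces K hfin v
  obtain ⟨δ, hδ, D, hD, hD1, hD2⟩ := lp_conn K (hlp v hvS) hε
  have hsub : D ⊆ A ∪ B := by
    intro y hy
    obtain ⟨hyS, hyb, -⟩ := hD1 y hy
    obtain ⟨s, hs, hys⟩ := K.mem_space_iff.1 hyS
    have hvs := vertex_mem_face K hv hs (hl y hyb s hs hys)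
    rcases dich s hs hvs with h | h
    · left; exact mem_biUnion (show s ∈ FA from ⟨hs, hvs, h⟩) hys
    · right; exact mem_biUnion (show s ∈ FB from ⟨hs, hvs, h⟩) hys
  have hpt : ∀ p : linkVertices K v, ∃ s ∈ K.faces, v ∈ s ∧ (∀ q ∈ s, q ≠ v → q = p) ∧
      ∃ y ∈ D, y ∈ convexHull ℝ (s : Set (Pt n)) := by
    rintro ⟨p, hpv, s, hs, hsp⟩
    have hm : ∀ q, q ∈ s ↔ q = v ∨ q = p := by
      intro q; rw [← Finset.mem_coe, hsp]; simp
    obtain ⟨y, hy, hyb, hyv⟩ := near_point hpv hδ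
    have hyh : y ∈ convexHull ℝ (s : Set (Pt n)) := by rwa [hsp, convexHull_pair]
    exact ⟨s, hs, (hm v).2 (Or.inl rfl), fun q hq hqv => ((hm q).1 hq).resolve_left hqv, y,
      hD2 y (K.convexHull_subset_space hs hyh) hyb hyv, hyh⟩
  have nA : (D ∩ A).Nonempty := by
    obtain ⟨s, hs, hvs, hq, y, hyD, hyh⟩ := hpt a
    refine ⟨y, hyD, mem_biUnion (show s ∈ FA from ⟨hs, hvs, fun p hp hpv => ?_⟩) hyh⟩
    rw [hq p hp hpv]
    exact ⟨a.2, SimpleGraph.Reachable.refl _⟩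
  have nB : (D ∩ B).Nonempty := by
    obtain ⟨s, hs, hvs, hq, y, hyD, hyh⟩ := hpt b
    refine ⟨y, hyD, mem_biUnion (show s ∈ FB from ⟨hs, hvs, fun p hp hpv => ?_⟩) hyh⟩
    rw [hq p hp hpv]
    rintro ⟨h, hr⟩
    exact hab hr
  obtain ⟨y, hyD, hyA, hyB⟩ := isPreconnected_closed_iff.1 hD A B cA cB hsub nA nB
  simp only [hA, hB, mem_iUnion, exists_prop] at hyA hyB
  obtain ⟨s, ⟨hs, -, hsC⟩, hys⟩ := hyA
  obtain ⟨t, ⟨ht, -, htC⟩, hyt⟩ := hyB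
  have h1 := K.inter_subset_convexHull hs ht ⟨hys, hyt⟩
  have h2 : ((s : Set (Pt n)) ∩ t) ⊆ {v} := by
    rintro z ⟨hzs, hzt⟩
    by_contra hz
    exact htC z hzt hz (hsC z hzs hz)
  have h3 := convexHull_mono (𝕜 := ℝ) h2 h1
  rw [convexHull_singleton] at h3
  exact (hD1 y hyD).2.2 h3

theorem link_finite (K : SimplicialComplex ℝ (Pt n)) (hfin : K.faces.Finite) (v : Pt n) :
    (linkVertices K v).Finite := by
  refine (hfin.biUnion (t := fun s : Finset (Pt n) => (s : Set (Pt n)))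
    fun s _ => s.finite_toSet).subset ?_
  rintro a ⟨-, s, hs, hsa⟩
  refine mem_biUnion hs ?_
  show a ∈ (s : Set (Pt n))
  rw [hsa]; simp

open Classical in
theorem tri_image (K : SimplicialComplex ℝ (Pt n)) (v : Pt n) (a : linkVertices K v) :
    trianglesContaining K {v, (a : Pt n)} =
      (fun b : linkVertices K v => ({v, (a : Pt n), (b : Pt n)} : Finset (Pt n))) ''
        (linkGraph K v).neighborSet a := by
  ext t
  constructor
  · rintro ⟨ht, htc, hsub⟩
    have hav : (a : Pt n) ≠ v := a.2.1
    have h1 : (t \ {v, (a : Pt n)}).card = 1 := by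
      rw [Finset.card_sdiff_of_subset hsub, htc, Finset.card_pair hav.symm]
    obtain ⟨b, hb⟩ := Finset.card_eq_one.1 h1
    have hbm : b ∈ t \ {v, (a : Pt n)} := by rw [hb]; simp
    simp only [Finset.mem_sdiff, Finset.mem_insert, Finset.mem_singleton, not_or] at hbm
    obtain ⟨hbt, hbv, hba⟩ := hbm
    have hteq : t = {v, (a : Pt n), b} := by
      rw [← Finset.sdiff_union_of_subset hsub, hb]
      ext z; simp; tauto
    have hvt : v ∈ t := hsub (by simp)
    have hbL : b ∈ linkVertices K v := by
      refine ⟨hbv, {v, b}, K.down_closed ht ?_ (by simp), by simp⟩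
      intro z hz
      simp only [Finset.mem_insert, Finset.mem_singleton] at hz
      rcases hz with rfl | rfl <;> assumption
    exact ⟨⟨b, hbL⟩, ⟨fun h => hba h.symm, t, ht, htc, by rw [hteq]; simp⟩, hteq.symm⟩
  · rintro ⟨b, ⟨hab, t, ht, htc, hts⟩, rfl⟩
    have : t = {v, (a : Pt n), (b : Pt n)} := by
      apply Finset.coe_injective; simpa using hts
    simp only [← this]
    refine ⟨ht, htc, ?_⟩
    rw [this]; intro z; simp; tauto

open Classical in
theorem tri_ncard (K : SimplicialComplex ℝ (Pt n)) (v : Pt n) [Fintype (linkVertices K v)]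
    (a : linkVertices K v) :
    (trianglesContaining K {v, (a : Pt n)}).ncard = (linkGraph K v).degree a := by
  rw [tri_image, ncard_image_of_injOn, ← SimpleGraph.card_neighborSet_eq_degree,
    ncard_eq_toFinset_card', toFinset_card]
  intro b hb c hc h
  have hbv : (b : Pt n) ≠ v := b.2.1
  have hba : (b : Pt n) ≠ a := fun h => hb.1 h.symm
  have : (b : Pt n) ∈ ({v, (a : Pt n), (c : Pt n)} : Finset (Pt n)) := by
    rw [← show ({v, (a : Pt n), (b : Pt n)} : Finset (Pt n)) = {v, (a : Pt n), (c : Pt n)} from h]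
    simp
  simp only [Finset.mem_insert, Finset.mem_singleton] at this
  exact Subtype.ext ((this.resolve_left hbv).resolve_left hba)

open Classical in
theorem deg_le_two (K : SimplicialComplex ℝ (Pt n)) (hfin : K.faces.Finite)
    (hdim : TwoDimensional K) (hlp : LocallyPlanar K) (v : Pt n) [Fintype (linkVertices K v)]
    (a : linkVertices K v) : (linkGraph K v).degree a ≤ 2 := by
  by_contra hcon
  push Not at hcon
  obtain ⟨b₁, b₂, b₃, hb₁, hb₂, hb₃, h12, h13, h23⟩ := Finset.two_lt_card_iff.1
    (show 2 < ((linkGraph K v).neighborFinset a).card from hcon)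
  simp only [SimpleGraph.mem_neighborFinset] at hb₁ hb₂ hb₃
  obtain ⟨n₁, t₁, f₁, c₁, s₁⟩ := hb₁
  obtain ⟨n₂, t₂, f₂, c₂, s₂⟩ := hb₂
  obtain ⟨n₃, t₃, f₃, c₃, s₃⟩ := hb₃
  obtain ⟨hav, e, he, hev⟩ := a.2
  have key : ∀ (b c : linkVertices K v) (s t : Finset (Pt n)), (a : Pt n) ≠ b → b ≠ c →
      (s : Set (Pt n)) = {v, (a : Pt n), (b : Pt n)} →
      (t : Set (Pt n)) = {v, (a : Pt n), (c : Pt n)} → s ≠ t := by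
    rintro b c s t hab hbc hs ht rfl
    have h1 : (b : Pt n) ∈ (s : Set (Pt n)) := by rw [hs]; simp
    rw [ht] at h1
    rcases h1 with h | h | h
    · exact b.2.1 h
    · exact hab h.symm
    · exact hbc (Subtype.ext h)
  exact no_three K hfin hdim hlp hav.symm he hev f₁ c₁ s₁ b₁.2.1 n₁.symm f₂ c₂ s₂ b₂.2.1 n₂.symm
    f₃ s₃ b₃.2.1 n₃.symm (key _ _ _ _ n₁ h12 s₁ s₂) (key _ _ _ _ n₁ h13 s₁ s₃)
    (key _ _ _ _ n₂ h23 s₂ s₃)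

open Classical in
theorem bdry_image (K : SimplicialComplex ℝ (Pt n)) (v : Pt n) [Fintype (linkVertices K v)] :
    {e : Finset (Pt n) | IsBoundaryEdge K e ∧ v ∈ e} =
      (fun a : linkVertices K v => ({v, (a : Pt n)} : Finset (Pt n))) ''
        {a | (linkGraph K v).degree a = 1} := by
  ext e
  constructor
  · rintro ⟨⟨he, hec, ht⟩, hve⟩
    have h1 : (e.erase v).card = 1 := by rw [Finset.card_erase_of_mem hve, hec]
    obtain ⟨a, ha⟩ := Finset.card_eq_one.1 h1
    have hea : e = {v, a} := by rw [← Finset.insert_erase hve, ha]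
    have hav : a ≠ v := by
      have : a ∈ e.erase v := by rw [ha]; simp
      exact Finset.ne_of_mem_erase this
    refine ⟨⟨a, hav, e, he, by rw [hea]; simp⟩, ?_, hea.symm⟩
    show _ = 1
    rw [← tri_ncard]
    rw [hea] at ht
    exact ht
  · rintro ⟨a, ha, rfl⟩
    obtain ⟨hav, e, he, hev⟩ := a.2
    have hea : e = {v, (a : Pt n)} := by apply Finset.coe_injective; simpa using hev
    refine ⟨⟨by rw [hea] at he; exact he, Finset.card_pair hav.symm, ?_⟩, by simp⟩
    beta_reduce
    rw [tri_ncard]; exact ha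

/-- in a locally planar complex, every vertex lying on some boundary edge lies on
exactly two boundary edges. -/
theorem boundary_vertex_two_boundary_edges (K : SimplicialComplex ℝ (Pt n))
    (hfin : K.faces.Finite) (hdim : TwoDimensional K) (hlp : LocallyPlanar K)
    (v : Pt n) (hv : v ∈ K.vertices) (hbe : ∃ e, IsBoundaryEdge K e ∧ v ∈ e) :
    {e : Finset (Pt n) | IsBoundaryEdge K e ∧ v ∈ e}.ncard = 2 := by
  classical
  letI : Fintype (linkVertices K v) := (link_finite K hfin v).fintype
  set G := linkGraph K v with hG
  have hdeg : ∀ a, G.degree a ≤ 2 := deg_le_two K hfin hdim hlp v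
  have hset := bdry_image K v
  have hne : ({a | G.degree a = 1} : Set (linkVertices K v)).Nonempty := by
    rw [← image_nonempty, ← hset]; exact hbe
  have hinj : Function.Injective
      (fun a : linkVertices K v => ({v, (a : Pt n)} : Finset (Pt n))) := by
    intro a b h
    have : (a : Pt n) ∈ ({v, (b : Pt n)} : Finset (Pt n)) := by
      rw [← show ({v, (a : Pt n)} : Finset (Pt n)) = {v, (b : Pt n)} from h]; simp
    simp only [Finset.mem_insert, Finset.mem_singleton] at this
    exact Subtype.ext (this.resolve_left a.2.1)
  have hn : {e : Finset (Pt n) | IsBoundaryEdge K e ∧ v ∈ e}.ncard =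
      (Finset.univ.filter fun a => G.degree a = 1).card := by
    rw [hset, ncard_image_of_injective _ hinj, ncard_eq_toFinset_card']
    congr 1
    ext a
    simp only [mem_toFinset, mem_setOf_eq, Finset.mem_filter, Finset.mem_univ, true_and]
    exact Iff.rfl
  rw [hn]
  have hpos : 0 < (Finset.univ.filter fun a => G.degree a = 1).card := by
    obtain ⟨a, ha⟩ := hne
    exact Finset.card_pos.2 ⟨a, by simpa using ha⟩
  have heven : Even (Finset.univ.filter fun a => G.degree a = 1).card := by
    have := G.even_card_odd_degree_vertices
    convert this using 4 with a
    have := hdeg a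
    constructor
    · intro h; rw [h]; exact odd_one
    · rintro ⟨k, hk⟩; omega
  have hconn : G.Connected := by
    have : Nonempty (linkVertices K v) := ⟨hne.some⟩
    exact ⟨link_preconnected K hfin hlp v hv⟩
  have hE := hconn.card_vert_le_card_edgeSet_add_one
  rw [Nat.card_eq_fintype_card, Nat.card_eq_fintype_card, ← SimpleGraph.edgeFinset_card] at hE
  have hsum := G.sum_degrees_eq_twice_card_edges
  have hle : (∑ a, G.degree a) + (Finset.univ.filter fun a => G.degree a = 1).card ≤
      2 * Fintype.card (linkVertices K v) := by
    rw [Finset.card_filter, ← Finset.sum_add_distrib, mul_comm, ← smul_eq_mul, ← Finset.card_univ]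
    apply Finset.sum_le_card_nsmul
    intro a _
    have := hdeg a
    split_ifs <;> omega
  obtain ⟨r, hr⟩ := heven
  omega

end PaperAlg
end
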